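/- Let X be a Borel subset of the Cantor space 2^ω that is dense in 2^ω, such that the subspace X is homogeneous, first category (meager in itself), and X ∉ Δ. Then there exists a semiideal R on ω such that the subspace R is first category and R ≡_W X as subsets of 2^ω. -/

import Mathlib

open Set

abbrev Cantor := ℕ → Bool

def UpwardClosed (S : Set Cantor) : Prop :=
  ∀ x ∈ S, ∀ y : Cantor, (∀ n, x n = true → y n = true) → y ∈ S

def DownwardClosed (R : Set Cantor) : Prop :=
  ∀ y ∈ R, ∀ x : Cantor, (∀ n, x n = true → y n = true) → x ∈ R

def ClosedUnderFinMod (S : Set Cantor) : Prop :=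
  ∀ x ∈ S, ∀ y : Cantor, {n | x n ≠ y n}.Finite → y ∈ S

def IsSemifilter (S : Set Cantor) : Prop :=
  (fun _ => false) ∉ S ∧ (fun _ => true) ∈ S ∧ UpwardClosed S ∧ ClosedUnderFinMod S

def IsSemiideal (R : Set Cantor) : Prop :=
  (fun _ => false) ∈ R ∧ (fun _ => true) ∉ R ∧ DownwardClosed R ∧ ClosedUnderFinMod R

def ClosedUnderInter (S : Set Cantor) : Prop :=
  ∀ x ∈ S, ∀ y ∈ S, (fun n => x n && y n) ∈ S

def IsFilterOnOmega (F : Set Cantor) : Prop := IsSemifilter F ∧ ClosedUnderInter F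

def IsHomogeneous (X : Type*) [TopologicalSpace X] : Prop :=
  ∀ x y : X, ∃ h : X ≃ₜ X, h x = y

def IsFsigma (A : Set Cantor) : Prop :=
  ∃ F : ℕ → Set Cantor, (∀ n, IsClosed (F n)) ∧ A = ⋃ n, F n

def DOmegaSigmaTwo (X : Set Cantor) : Prop :=
  ∃ A : ℕ → Set Cantor, (∀ n, IsFsigma (A n)) ∧ Monotone A ∧
    X = ⋃ n ∈ {n : ℕ | Odd n}, (A n \ ⋃ m < n, A m)

def InDelta (X : Set Cantor) : Prop := DOmegaSigmaTwo X ∧ DOmegaSigmaTwo Xᶜ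

def WadgeLe (A B : Set Cantor) : Prop :=
  ∃ f : Cantor → Cantor, Continuous f ∧ A = f ⁻¹' B

def WadgeEquiv (A B : Set Cantor) : Prop := WadgeLe A B ∧ WadgeLe B A

def CompletelyMetrizable (X : Type*) [t : TopologicalSpace X] : Prop :=
  ∃ m : MetricSpace X, m.toUniformSpace.toTopologicalSpace = t ∧
    @CompleteSpace X m.toUniformSpace

def FirstCategory (X : Type*) [TopologicalSpace X] : Prop :=
  ∃ f : ℕ → Set X, (∀ n, interior (closure (f n)) = ∅) ∧ (Set.univ : Set X) = ⋃ n, f n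

def CantorFin : Set Cantor := {x | {n | x n = true}.Finite}

def BorelSet (X : Set Cantor) : Prop := @MeasurableSet Cantor (borel Cantor) X

/-!
The semiideal `R` generated by the branches of the binary tree through the points of `X` always
satisfies `X ≤_W R`, and it is first category because it is covered by countably many closed sets of
sets almost contained in a branch. If `R ≤_W X` fails, Wadge's lemma (from Borel determinacy, proved
by Martin's unravelling of closed games) gives a continuous reduction of `Xᶜ` to `R`. As `X` is
meagre, on some nonempty open set this reduction has values in one of the closed pieces, and reading
off the branch below which a value lies makes it a reduction of `Xᶜ` to `X` that is continuous on a
Gδ set containing all relevant points of `X`. By homogeneity copies of this self-dual reduction, and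
of the identity reduction of `X`, exist from some open set into any other, up to sets in `Δ`. Since
`X` is not in `Δ` on any open set, these maps can be iterated as in the Martin–Monk argument,
producing a Borel subset of Cantor space whose membership changes with every single coordinate;
there is no such set with the Baire property.
-/

universe u v w

/-! ### Game trees and strategies -/

/-- A pruned tree of finite positions, given level by level. Positions are abstract, so that a tree
can carry extra information (as the auxiliary trees of the unravelling do). -/
structure GameTree where
  Pos : ℕ → Type u
  restrict : ∀ {n}, Pos (n + 1) → Pos n
  restrict_surjective : ∀ n, Function.Surjective (restrict (n := n))

namespace GameTree

/-- A set of positions of a game tree, split by level. -/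
abbrev PosSet (T : GameTree.{u}) := ∀ n, Set (T.Pos n)

/-- A position of a game tree together with its level. -/
abbrev Node (T : GameTree.{u}) := Σ n, T.Pos n

/-- The branches, i.e. the infinite plays, of a game tree. -/
def IsBranch (T : GameTree.{u}) (x : ∀ n, T.Pos n) : Prop := ∀ n, T.restrict (x (n + 1)) = x n

section Ancestor

variable (T : GameTree.{u})

/-- The ancestor of level `m` of a position of level `n`. -/
def anc {m n : ℕ} (h : m ≤ n) : T.Pos n → T.Pos m :=
  Nat.leRecOn (C := fun k => T.Pos k → T.Pos m) h (fun f q => f (T.restrict q)) id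

@[simp]
theorem anc_self {n : ℕ} (h : n ≤ n) (p : T.Pos n) : T.anc h p = p :=
  congrFun (Nat.leRecOn_self (C := fun k => T.Pos k → T.Pos n) id) p

theorem anc_succ {m n : ℕ} (h : m ≤ n) (h' : m ≤ n + 1) (p : T.Pos (n + 1)) :
    T.anc h' p = T.anc h (T.restrict p) :=
  congrFun (Nat.leRecOn_succ (C := fun k => T.Pos k → T.Pos m) h id) p

theorem restrict_anc {m n : ℕ} (h : m + 1 ≤ n) (p : T.Pos n) :
    T.restrict (T.anc h p) = T.anc (Nat.le_of_succ_le h) p := by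
  induction n, h using Nat.le_induction with
  | base => rw [anc_self, anc_succ T le_rfl, anc_self]
  | succ n h ih => rw [anc_succ T h, anc_succ T (Nat.le_of_succ_le h), ih]

variable {T} in
theorem IsBranch.anc {x : ∀ n, T.Pos n} (hx : T.IsBranch x) {m n : ℕ} (h : m ≤ n) :
    T.anc h (x n) = x m := by
  induction n, h using Nat.le_induction with
  | base => exact anc_self ..
  | succ n h ih => rw [anc_succ T h, hx, ih]

end Ancestor

/-- Player `b` moves at the levels `n` with `n.bodd = b`; so `false` is player I, who moves first,
and `true` is player II. -/
abbrev Player := Bool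

/-- A positional strategy. It prescribes a move at every level, so that it can be followed by either
player. -/
@[ext]
structure Strategy (T : GameTree.{u}) where
  move : ∀ {n}, T.Pos n → T.Pos (n + 1)
  restrict_move : ∀ {n} (p : T.Pos n), T.restrict (move p) = p

instance (T : GameTree.{u}) : Nonempty (Strategy T) :=
  ⟨fun p => (T.restrict_surjective _ p).choose, fun p => (T.restrict_surjective _ p).choose_spec⟩

/-- From level `k` on, player `b` plays `x` according to the strategy `σ`. -/
def Strategy.Follows {T : GameTree.{u}} (σ : Strategy T) (b : Player) (x : ∀ n, T.Pos n)
    (k : ℕ := 0) : Prop :=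
  ∀ n, k ≤ n → n.bodd = b → x (n + 1) = σ.move (x n)

section Attractor

variable (T : GameTree.{u}) (b : Player) (A : T.PosSet)

/-- Player `b` can force the play from a given position into `A`, with an ordinal counting down
along the way. -/
inductive ForcesWithin : Ordinal.{u} → ∀ n, T.Pos n → Prop
  | hit {α n p} : p ∈ A n → ForcesWithin α n p
  | own {α β n p} (q) : n.bodd = b → β < α → T.restrict q = p → ForcesWithin β (n + 1) q →
      ForcesWithin α n p
  | opp {α β n p} : n.bodd ≠ b → β < α →
      (∀ q, T.restrict q = p → ForcesWithin β (n + 1) q) → ForcesWithin α n p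

/-- The positions from which player `b` can force the play into `A`. -/
def attractor : T.PosSet := fun n => {p | ∃ α, T.ForcesWithin b A α n p}

variable {T b A}

theorem ForcesWithin.mono {α β : Ordinal.{u}} {n : ℕ} {p : T.Pos n}
    (h : T.ForcesWithin b A α n p) (hαβ : α ≤ β) : T.ForcesWithin b A β n p := by
  cases h with
  | hit h => exact .hit h
  | own q hn hα hq h => exact .own q hn (hα.trans_le hαβ) hq h
  | opp hn hα h => exact .opp hn (hα.trans_le hαβ) h

theorem subset_attractor : A ≤ T.attractor b A := fun _ _ h => ⟨0, .hit h⟩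

theorem restrict_mem_attractor {n : ℕ} {q : T.Pos (n + 1)} (hn : n.bodd = b)
    (h : q ∈ T.attractor b A (n + 1)) : T.restrict q ∈ T.attractor b A n := by
  obtain ⟨β, h⟩ := h
  exact ⟨Order.succ β, .own q hn (Order.lt_succ β) rfl h⟩

theorem mem_attractor_of_forall {n : ℕ} {p : T.Pos n} (hn : n.bodd ≠ b)
    (h : ∀ q, T.restrict q = p → q ∈ T.attractor b A (n + 1)) : p ∈ T.attractor b A n := by
  choose α hα using fun q : {q // T.restrict q = p} => h q q.2
  exact ⟨Order.succ (iSup α), .opp hn (Order.lt_succ _) fun q hq =>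
    (hα ⟨q, hq⟩).mono (Ordinal.le_iSup α _)⟩

theorem exists_notMem_attractor {n : ℕ} {p : T.Pos n} (hn : n.bodd ≠ b)
    (h : p ∉ T.attractor b A n) : ∃ q, T.restrict q = p ∧ q ∉ T.attractor b A (n + 1) := by
  by_contra! hq
  exact h (mem_attractor_of_forall hn hq)

theorem exists_extension_of_mem_attractor {n : ℕ} {p : T.Pos n} (h : p ∈ T.attractor b A n) :
    ∃ (m : ℕ) (hm : n ≤ m) (u : T.Pos m), T.anc hm u = p ∧ u ∈ A m := by
  have of_succ {n : ℕ} (q : T.Pos (n + 1))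
      (h : ∃ (m : ℕ) (hm : n + 1 ≤ m) (u : T.Pos m), T.anc hm u = q ∧ u ∈ A m) :
      ∃ (m : ℕ) (hm : n ≤ m) (u : T.Pos m), T.anc hm u = T.restrict q ∧ u ∈ A m := by
    obtain ⟨m, hm, u, rfl, hu⟩ := h
    exact ⟨m, Nat.le_of_succ_le hm, u, (T.restrict_anc hm u).symm, hu⟩
  obtain ⟨α, h⟩ := h
  induction h with
  | hit h => exact ⟨_, le_rfl, _, anc_self .., h⟩
  | own q _ _ hq _ ih => exact hq ▸ of_succ q ih
  | @opp _ _ n p _ _ _ ih =>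
    obtain ⟨q, rfl⟩ := T.restrict_surjective n p
    exact of_succ q (ih q rfl)

theorem attractor_bot : T.attractor b ⊥ = ⊥ := by
  refine eq_bot_iff.2 fun n p hp => ?_
  obtain ⟨m, -, u, -, hu⟩ := exists_extension_of_mem_attractor hp
  exact hu.elim

/-- A move that decreases the least ordinal witnessing membership in the attractor. -/
theorem exists_decreasing_move {n : ℕ} (p : T.Pos n) (hn : n.bodd = b) :
    ∃ q, T.restrict q = p ∧ ∀ α, T.ForcesWithin b A α n p →
      p ∈ A n ∨ ∃ β < α, T.ForcesWithin b A β (n + 1) q := by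
  obtain ⟨q₀, hq₀⟩ := T.restrict_surjective n p
  rcases {α | T.ForcesWithin b A α n p}.eq_empty_or_nonempty with h | h
  · exact ⟨q₀, hq₀, fun α hα => (Set.eq_empty_iff_forall_notMem.1 h α hα).elim⟩
  · have hle : ∀ α, T.ForcesWithin b A α n p → sInf {α | T.ForcesWithin b A α n p} ≤ α :=
      fun α hα => csInf_le' hα
    have hmin : T.ForcesWithin b A (sInf {α | T.ForcesWithin b A α n p}) n p := csInf_mem h
    generalize sInf {α | T.ForcesWithin b A α n p} = α₀ at hle hmin
    cases hmin with
    | hit h => exact ⟨q₀, hq₀, fun _ _ => .inl h⟩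
    | own q _ hβ hq h => exact ⟨q, hq, fun α hα => .inr ⟨_, hβ.trans_le (hle α hα), h⟩⟩
    | opp h => exact absurd hn h

variable (T b A) in
theorem exists_attractorStrategy : ∃ σ : Strategy T, ∀ x, T.IsBranch x → ∀ k,
    x k ∈ T.attractor b A k → σ.Follows b x k → ∃ n, k ≤ n ∧ x n ∈ A n := by
  have hmove (n : ℕ) (p : T.Pos n) : ∃ q, T.restrict q = p ∧ (n.bodd = b → ∀ α,
      T.ForcesWithin b A α n p → p ∈ A n ∨ ∃ β < α, T.ForcesWithin b A β (n + 1) q) := by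
    by_cases hn : n.bodd = b
    · exact (exists_decreasing_move p hn).imp fun q hq => ⟨hq.1, fun _ => hq.2⟩
    · exact (T.restrict_surjective n p).imp fun q hq => ⟨hq, fun h => absurd h hn⟩
  choose w hw hdecr using hmove
  refine ⟨⟨fun p => w _ p, fun p => hw _ p⟩, ?_⟩
  rintro x hx k ⟨α, hα⟩ hσ
  induction α using WellFoundedLT.induction generalizing k with
  | ind α ih =>
    have of_succ {β : Ordinal.{u}} (hβ : β < α) (h : T.ForcesWithin b A β (k + 1) (x (k + 1))) :
        ∃ n, k ≤ n ∧ x n ∈ A n := by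
      obtain ⟨n, hn, hxn⟩ := ih β hβ (k + 1) h fun n hn => hσ n (Nat.le_of_succ_le hn)
      exact ⟨n, Nat.le_of_succ_le hn, hxn⟩
    by_cases hk : k.bodd = b
    · obtain h | ⟨β, hβ, h⟩ := hdecr k (x k) hk α hα
      · exact ⟨k, le_rfl, h⟩
      · exact of_succ hβ (hσ k le_rfl hk ▸ h)
    · cases hα with
      | hit h => exact ⟨k, le_rfl, h⟩
      | own _ h => exact absurd h hk
      | opp _ hβ h => exact of_succ hβ (h _ (hx k))

variable (T b A) in
/-- A strategy by which player `b` reaches `A` from every position of the attractor of `A`. -/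
noncomputable def attractorStrategy : Strategy T := (exists_attractorStrategy T b A).choose

theorem IsBranch.exists_mem_of_attractorStrategy {x : ∀ n, T.Pos n} (hx : T.IsBranch x) {k : ℕ}
    (hk : x k ∈ T.attractor b A k) (hσ : (T.attractorStrategy b A).Follows b x k) :
    ∃ n, k ≤ n ∧ x n ∈ A n :=
  (exists_attractorStrategy T b A).choose_spec x hx k hk hσ

variable (T b A) in
theorem exists_escapeStrategy : ∃ σ : Strategy T, ∀ x, T.IsBranch x → σ.Follows (!b) x →
    x 0 ∉ T.attractor b A 0 → ∀ n, x n ∉ T.attractor b A n := by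
  have hmove (n : ℕ) (p : T.Pos n) : ∃ q, T.restrict q = p ∧
      (n.bodd ≠ b → p ∉ T.attractor b A n → q ∉ T.attractor b A (n + 1)) := by
    by_cases h : n.bodd ≠ b ∧ p ∉ T.attractor b A n
    · exact (exists_notMem_attractor h.1 h.2).imp fun q hq => ⟨hq.1, fun _ _ => hq.2⟩
    · exact (T.restrict_surjective n p).imp fun q hq => ⟨hq, fun h₁ h₂ => absurd ⟨h₁, h₂⟩ h⟩
  choose w hw hescape using hmove
  refine ⟨⟨fun p => w _ p, fun p => hw _ p⟩, fun x hx hσ h₀ n => ?_⟩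
  induction n with
  | zero => exact h₀
  | succ n ih =>
    by_cases hn : n.bodd = b
    · exact fun h => ih (hx n ▸ restrict_mem_attractor hn h)
    · rw [hσ n (Nat.zero_le n) (Bool.eq_not.2 hn)]
      exact hescape n (x n) hn ih

end Attractor

/-! ### Coverings and their inverse limits -/

/-- A level-preserving map of positions that commutes with restriction. -/
@[ext]
structure Hom (T' T : GameTree.{u}) where
  map : ∀ {n}, T'.Pos n → T.Pos n
  restrict_map : ∀ {n} (p : T'.Pos (n + 1)), T.restrict (map p) = map (T'.restrict p)

namespace Hom

variable {T'' T' T : GameTree.{u}}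

theorem isBranch (f : Hom T' T) {x : ∀ n, T'.Pos n} (hx : T'.IsBranch x) :
    T.IsBranch fun n => f.map (x n) := fun n => by rw [f.restrict_map, hx]

/-- The identity homomorphism. -/
@[simps]
protected def id (T : GameTree.{u}) : Hom T T where
  map p := p
  restrict_map _ := rfl

/-- The composition of homomorphisms. -/
@[simps]
def comp (f : Hom T' T) (g : Hom T'' T') : Hom T'' T where
  map p := f.map (g.map p)
  restrict_map p := by rw [f.restrict_map, g.restrict_map]

end Hom

/-- Two strategies prescribe the same moves at all levels up to `n`. -/
def Strategy.AgreeUpTo {T : GameTree.{u}} (n : ℕ) (σ τ : Strategy T) : Prop :=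
  ∀ m ≤ n, ∀ p : T.Pos m, σ.move p = τ.move p

theorem Strategy.AgreeUpTo.mono {T : GameTree.{u}} {m n : ℕ} {σ τ : Strategy T}
    (h : σ.AgreeUpTo n τ) (hmn : m ≤ n) : σ.AgreeUpTo m τ :=
  fun l hl => h l (hl.trans hmn)

/-- A covering of `T` by `T'` in the sense of Martin, which is trivial up to level `K`. Strategies
on `T'` are pushed to strategies on `T` by `φ`, and plays against the pushed strategies lift. -/
structure Covering (K : ℕ) (T' T : GameTree.{u}) where
  π : Hom T' T
  φ : Player → Strategy T' → Strategy T
  agreeUpTo_φ : ∀ {b σ τ n}, σ.AgreeUpTo n τ → (φ b σ).AgreeUpTo n (φ b τ)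
  exists_lift : ∀ {b σ x}, T.IsBranch x → (φ b σ).Follows b x →
    ∃ x', T'.IsBranch x' ∧ σ.Follows b x' ∧ ∀ n, π.map (x' n) = x n
  bijective_π : ∀ n ≤ K, Function.Bijective (π.map (n := n))
  φ_move : ∀ b σ, ∀ n < K, ∀ p : T'.Pos n, (φ b σ).move (π.map p) = π.map (σ.move p)

namespace Covering

variable {K K' : ℕ} {T'' T' T : GameTree.{u}}

/-- The identity covering. -/
protected def id (K : ℕ) (T : GameTree.{u}) : Covering K T T where
  π := .id T
  φ _ σ := σ
  agreeUpTo_φ h := h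
  exists_lift hx hσ := ⟨_, hx, hσ, fun _ => rfl⟩
  bijective_π _ _ := Function.bijective_id
  φ_move _ _ _ _ _ := rfl

/-- The composition of coverings. -/
def comp (c : Covering K T' T) (d : Covering K T'' T') : Covering K T'' T where
  π := c.π.comp d.π
  φ b σ := c.φ b (d.φ b σ)
  agreeUpTo_φ h := c.agreeUpTo_φ (d.agreeUpTo_φ h)
  exists_lift hx hσ := by
    obtain ⟨x', hx', hσ', h'⟩ := c.exists_lift hx hσ
    obtain ⟨x'', hx'', hσ'', h''⟩ := d.exists_lift hx' hσ'
    exact ⟨x'', hx'', hσ'', fun n => by rw [Hom.comp_map, h'', h']⟩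
  bijective_π n hn := (c.bijective_π n hn).comp (d.bijective_π n hn)
  φ_move b σ n hn p := by rw [Hom.comp_map, c.φ_move b _ n hn, d.φ_move b _ n hn, Hom.comp_map]

/-- A covering that is trivial up to level `K'` is trivial up to every lower level. -/
def mono (c : Covering K' T' T) (h : K ≤ K') : Covering K T' T where
  __ := c
  bijective_π n hn := c.bijective_π n (hn.trans h)
  φ_move b σ n hn := c.φ_move b σ n (hn.trans_le h)

end Covering

section InverseLimit

variable {B : ℕ → Type u} {f : ∀ i, B (i + 1) → B i} {i₀ : ℕ}

theorem exists_compatible_seq (hf : ∀ i, i₀ ≤ i → Function.Surjective (f i)) (q : B i₀) :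
    ∃ y : ∀ i, B i, (∀ i, f i (y (i + 1)) = y i) ∧ y i₀ = q := by
  induction i₀ generalizing B with
  | zero =>
    choose g hg using fun i => hf i (Nat.zero_le i)
    exact ⟨fun i => Nat.rec q g i, fun i => hg i _, rfl⟩
  | succ i₀ ih =>
    obtain ⟨y, hy, hq⟩ := ih (B := fun i => B (i + 1)) (f := fun i => f (i + 1))
      (fun i hi => hf (i + 1) (by lia)) q
    exact ⟨fun | 0 => f 0 (y 0) | i + 1 => y i, fun | 0 => rfl | i + 1 => hy i, hq⟩

theorem compatible_seq_ext (hf : ∀ i, i₀ ≤ i → Function.Injective (f i)) {y z : ∀ i, B i}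
    (hy : ∀ i, f i (y (i + 1)) = y i) (hz : ∀ i, f i (z (i + 1)) = z i) (h : y i₀ = z i₀) :
    y = z := by
  funext i
  obtain hi | hi := le_total i₀ i
  · induction i, hi using Nat.le_induction with
    | base => exact h
    | succ i hi ih => exact hf i hi (by rw [hy, hz, ih])
  · induction hi using Nat.decreasingInduction with
    | self => exact h
    | of_succ i _ ih => rw [← hy, ← hz, ih]

end InverseLimit

section Limit

variable {K : ℕ} {T : ℕ → GameTree.{u}} (c : ∀ i, Covering (K + 1 + i) (T (i + 1)) (T i))

/-- The positions of level `n` in the inverse limit of a sequence of coverings. -/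
abbrev LimitPos (n : ℕ) : Type u :=
  {y : ∀ i, (T i).Pos n // ∀ i, (c i).π.map (y (i + 1)) = y i}

theorem LimitPos.bijective_eval {n i : ℕ} (h : n ≤ K + 1 + i) :
    Function.Bijective fun y : LimitPos c n => y.1 i := by
  have hbij (j : ℕ) (hj : i ≤ j) := (c j).bijective_π n (by lia)
  refine ⟨fun y z hyz => Subtype.ext <|
    compatible_seq_ext (fun j hj => (hbij j hj).1) y.2 z.2 hyz, fun q => ?_⟩
  obtain ⟨y, hy, hq⟩ := exists_compatible_seq (fun j hj => (hbij j hj).2) q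
  exact ⟨⟨y, hy⟩, hq⟩

/-- The inverse limit of a sequence of coverings. -/
def limit : GameTree.{u} where
  Pos := LimitPos c
  restrict y := ⟨fun i => (T i).restrict (y.1 i), fun i => by rw [← (c i).π.restrict_map, y.2]⟩
  restrict_surjective n y := by
    obtain ⟨q, hq⟩ := (T n).restrict_surjective n (y.1 n)
    obtain ⟨z, rfl⟩ := (LimitPos.bijective_eval c (n := n + 1) (i := n) (by lia)).2 q
    exact ⟨z, (LimitPos.bijective_eval c (n := n) (i := n) (by lia)).1 hq⟩

/-- The projection of the inverse limit to its `i`-th tree. -/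
@[simps]
def limitProj (i : ℕ) : Hom (limit c) (T i) where
  map y := y.1 i
  restrict_map _ := rfl

open Classical in
/-- A strategy on the inverse limit, copied to the `i`-th tree. This is meaningful only at the
levels at which the projection is bijective. -/
noncomputable def copyStrategy (σ : Strategy (limit c)) (i : ℕ) : Strategy (T i) where
  move q := if h : ∃ y, (limitProj c i).map y = q then (limitProj c i).map (σ.move h.choose)
    else ((T i).restrict_surjective _ q).choose
  restrict_move q := by
    split_ifs with h
    · rw [Hom.restrict_map, σ.restrict_move, h.choose_spec]
    · exact ((T i).restrict_surjective _ q).choose_spec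

/-- A strategy on the inverse limit, copied to the tree `i + d` and pushed down to the tree `i`. -/
noncomputable def pushStrategyFrom (b : Player) (σ : Strategy (limit c)) :
    ℕ → ∀ i, Strategy (T i)
  | 0, i => copyStrategy c σ i
  | d + 1, i => (c i).φ b (pushStrategyFrom b σ d (i + 1))

/-- A strategy on the inverse limit, pushed to the `i`-th tree. At level `n` all the strategies
pushed from sufficiently late trees agree, and `i + n` is late enough. -/
noncomputable def pushStrategy (b : Player) (σ : Strategy (limit c)) (i : ℕ) : Strategy (T i) where
  move {n} := (pushStrategyFrom c b σ n i).move
  restrict_move := Strategy.restrict_move _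

variable {c} {b : Player} {σ τ : Strategy (limit c)} {i n : ℕ}

theorem bijective_limitProj (h : n ≤ K + 1 + i) :
    Function.Bijective ((limitProj c i).map (n := n)) := LimitPos.bijective_eval c h

theorem copyStrategy_move (h : n ≤ K + 1 + i) (y : (limit c).Pos n) :
    (copyStrategy c σ i).move ((limitProj c i).map y) = (limitProj c i).map (σ.move y) := by
  have hy : ∃ z, (limitProj c i).map z = (limitProj c i).map y := ⟨y, rfl⟩
  have hchoose : hy.choose = y := (bijective_limitProj h).1 hy.choose_spec
  simp only [copyStrategy, dif_pos hy, hchoose]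

theorem pushStrategyFrom_agreeUpTo_succ {d : ℕ} (hn : n < K + 1 + i + d) :
    (pushStrategyFrom c b σ d i).AgreeUpTo n (pushStrategyFrom c b σ (d + 1) i) := by
  induction d generalizing i n with
  | zero =>
    intro m hm q
    obtain ⟨y, rfl⟩ := (bijective_limitProj (c := c) (n := m) (i := i) (by lia)).2 q
    have hy : (c i).π.map ((limitProj c (i + 1)).map y) = (limitProj c i).map y := y.2 i
    calc (copyStrategy c σ i).move ((limitProj c i).map y)
        = (limitProj c i).map (σ.move y) := copyStrategy_move (by lia) y
      _ = (c i).π.map ((limitProj c (i + 1)).map (σ.move y)) := ((σ.move y).2 i).symm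
      _ = (c i).π.map ((copyStrategy c σ (i + 1)).move ((limitProj c (i + 1)).map y)) := by
        rw [copyStrategy_move (by lia)]
      _ = ((c i).φ b (copyStrategy c σ (i + 1))).move ((limitProj c i).map y) := by
        rw [← hy, (c i).φ_move b _ m (by lia)]
  | succ d ih => exact (c i).agreeUpTo_φ (ih (by lia))

theorem pushStrategyFrom_agreeUpTo {d e : ℕ} (hde : d ≤ e) (hn : n < K + 1 + i + d) :
    (pushStrategyFrom c b σ d i).AgreeUpTo n (pushStrategyFrom c b σ e i) := by
  induction e, hde using Nat.le_induction with
  | base => exact fun _ _ _ => rfl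
  | succ e he ih =>
    exact fun m hm p => (ih m hm p).trans (pushStrategyFrom_agreeUpTo_succ (by lia) m hm p)

theorem φ_pushStrategy (i : ℕ) :
    (c i).φ b (pushStrategy c b σ (i + 1)) = pushStrategy c b σ i := by
  ext n p
  have hagree : (pushStrategy c b σ (i + 1)).AgreeUpTo n (pushStrategyFrom c b σ n (i + 1)) :=
    fun m hm q => pushStrategyFrom_agreeUpTo hm (by lia) m le_rfl q
  exact ((c i).agreeUpTo_φ hagree n le_rfl p).trans
    (pushStrategyFrom_agreeUpTo_succ (by lia) n le_rfl p).symm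

theorem pushStrategy_move (h : n < K + 1 + i) (y : (limit c).Pos n) :
    (pushStrategy c b σ i).move ((limitProj c i).map y) = (limitProj c i).map (σ.move y) :=
  (pushStrategyFrom_agreeUpTo (Nat.zero_le n) (by lia) n le_rfl _).symm.trans
    (copyStrategy_move h.le y)

theorem agreeUpTo_pushStrategyFrom (h : σ.AgreeUpTo n τ) (d : ℕ) :
    (pushStrategyFrom c b σ d i).AgreeUpTo n (pushStrategyFrom c b τ d i) := by
  induction d generalizing i with
  | zero =>
    intro m hm q
    simp only [pushStrategyFrom, copyStrategy, h m hm]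
  | succ d ih => exact (c i).agreeUpTo_φ ih

/-- The tree `n` decides the moves of level `n` of a play of the inverse limit, so the play is
lifted successively through all the coverings. -/
theorem exists_lift_limit {x : ∀ n, (T 0).Pos n} (hx : (T 0).IsBranch x)
    (hσ : (pushStrategy c b σ 0).Follows b x) :
    ∃ y, (limit c).IsBranch y ∧ σ.Follows b y ∧ ∀ n, (limitProj c 0).map (y n) = x n := by
  let Play (i : ℕ) := {x : ∀ n, (T i).Pos n // (T i).IsBranch x ∧
    (pushStrategy c b σ i).Follows b x}
  have hlift (i : ℕ) (x : Play i) : ∃ x' : Play (i + 1), ∀ n, (c i).π.map (x'.1 n) = x.1 n := by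
    obtain ⟨x, hx, hσ⟩ := x
    rw [← φ_pushStrategy] at hσ
    obtain ⟨x', hx', hσ', h⟩ := (c i).exists_lift hx hσ
    exact ⟨⟨x', hx', hσ'⟩, h⟩
  choose next hnext using hlift
  let plays (i : ℕ) : Play i := Nat.rec ⟨x, hx, hσ⟩ next i
  let y (n : ℕ) : (limit c).Pos n := ⟨fun i => (plays i).1 n, fun i => hnext i (plays i) n⟩
  refine ⟨y, fun n => Subtype.ext (funext fun i => (plays i).2.1 n), fun n _ hn => ?_,
    fun n => rfl⟩
  refine (bijective_limitProj (n := n + 1) (i := n) (by lia)).1 ?_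
  exact ((plays n).2.2 n (Nat.zero_le n) hn).trans (pushStrategy_move (by lia) (y n))

variable (c) in
/-- The covering of the first tree by the inverse limit. -/
noncomputable def limitCovering : Covering (K + 1) (limit c) (T 0) where
  π := limitProj c 0
  φ b σ := pushStrategy c b σ 0
  agreeUpTo_φ h m hm p := agreeUpTo_pushStrategyFrom h m m hm p
  exists_lift := exists_lift_limit
  bijective_π _ hn := bijective_limitProj hn
  φ_move _ _ _ hn := pushStrategy_move hn

end Limit

/-! ### The auxiliary game unravelling an open set -/

section Auxiliary

variable (T : GameTree.{u}) (K : ℕ) (N S : T.PosSet)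

variable {T} in
/-- One of two positions extends the other. -/
def Comparable {n m : ℕ} (p : T.Pos n) (q : T.Pos m) : Prop :=
  (∀ h : n ≤ m, T.anc h q = p) ∧ ∀ h : m ≤ n, T.anc h p = q

variable {T} in
theorem Comparable.restrict {n m : ℕ} {p : T.Pos (n + 1)} {q : T.Pos m} (h : Comparable p q) :
    Comparable (T.restrict p) q := by
  refine ⟨fun hn => ?_, fun hm => ?_⟩
  · obtain rfl | hn := hn.eq_or_lt
    · rw [← h.2 (Nat.le_succ n), T.anc_succ le_rfl, anc_self, anc_self]
    · rw [← h.1 hn, T.restrict_anc]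
  · rw [← T.anc_succ hm (hm.trans (Nat.le_succ n)), h.2]

variable {T} in
theorem Comparable.exists_succ {n m : ℕ} {p : T.Pos n} {q : T.Pos m} (h : Comparable p q) :
    ∃ p', T.restrict p' = p ∧ Comparable p' q := by
  by_cases hn : n + 1 ≤ m
  · refine ⟨T.anc hn q, by rw [T.restrict_anc, h.1], fun _ => rfl, fun hm => ?_⟩
    obtain rfl := le_antisymm hn hm
    rw [anc_self, anc_self]
  · obtain ⟨p', rfl⟩ := T.restrict_surjective n p
    exact ⟨p', rfl, fun h => absurd h hn, fun hm => by rw [T.anc_succ (by lia), h.2]⟩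

variable {T} in
theorem IsBranch.comparable {x : ∀ n, T.Pos n} (hx : T.IsBranch x) (n m : ℕ) :
    Comparable (x n) (x m) :=
  ⟨hx.anc, hx.anc⟩

/-- The positions of `N` of level at least `K + 2` from which player II cannot force `S`. Player I
wants to reach one of them if player II disputes the claim that `S` contains all of `N`. -/
def goal : T.PosSet := fun n => {p | K + 2 ≤ n ∧ p ∈ N n ∧ p ∉ T.attractor true S n}

/-- After level `K`, neither has player II a way to force `S`, nor player I one to force `goal`. -/
def Undecided {n : ℕ} (p : T.Pos n) : Prop :=
  ∀ m, K + 1 ≤ m → ∀ h : m ≤ n, T.anc h p ∉ T.attractor true S m ∧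
    T.anc h p ∉ T.attractor false (T.goal K N S) m

/-- The rules of the auxiliary game of Martin's unravelling. With the move from level `K`, player I
claims that player II can be held to a set `S`. With the following move, player II either accepts
(`none`), after which neither player may enter the attractors of `S` and `goal`, or names a target
in `goal`, after which the play has to pass through this target. -/
inductive Legal : ∀ {n : ℕ}, T.Pos n → T.PosSet → Option T.Node → Prop
  | bare {n} {p : T.Pos n} : n ≤ K → Legal p ⊥ none
  | claimed {n} {p : T.Pos n} {S} : n = K + 1 → p ∉ T.attractor true S n → Legal p S none
  | accepted {n} {p : T.Pos n} {S} : K + 2 ≤ n → T.Undecided K N S p → Legal p S none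
  | targeted {n} {p : T.Pos n} {S u} (h : K + 1 ≤ n) : K + 2 ≤ n →
      T.anc h p ∉ T.attractor true S (K + 1) → u.2 ∈ T.goal K N S u.1 → Comparable p u.2 →
      Legal p S (some u)

open Classical in
/-- The part of a claim that is known at level `n`: the claim is made with the move from level
`K`. -/
noncomputable def claimAt (n : ℕ) (S : T.PosSet) : T.PosSet := if n ≤ K then ⊥ else S

/-- The part of an answer that is known at level `n`: it is given with the move from level
`K + 1`. -/
def targetAt (n : ℕ) (c : Option T.Node) : Option T.Node := if n ≤ K + 1 then none else c

variable {T K N S}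

section Truncation

variable {n : ℕ} {c : Option T.Node}

theorem claimAt_of_le (hn : n ≤ K) : T.claimAt K n S = ⊥ := if_pos hn

theorem claimAt_of_lt (hn : K < n) : T.claimAt K n S = S := if_neg (by lia)

theorem targetAt_of_le (hn : n ≤ K + 1) : T.targetAt K n c = none := if_pos hn

theorem targetAt_of_lt (hn : K + 1 < n) : T.targetAt K n c = c := if_neg (by lia)

theorem targetAt_none : T.targetAt K n none = none := ite_self _

theorem claimAt_claimAt_succ : T.claimAt K n (T.claimAt K (n + 1) S) = T.claimAt K n S := by
  obtain hn | hn := le_or_gt n K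
  · rw [claimAt_of_le hn, claimAt_of_le hn]
  · rw [claimAt_of_lt (n := n + 1) (by lia)]

theorem targetAt_targetAt_succ : T.targetAt K n (T.targetAt K (n + 1) c) = T.targetAt K n c := by
  obtain hn | hn := le_or_gt n (K + 1)
  · rw [targetAt_of_le hn, targetAt_of_le hn]
  · rw [targetAt_of_lt (n := n + 1) (by lia)]

end Truncation

theorem Undecided.restrict {n : ℕ} {p : T.Pos (n + 1)} (h : T.Undecided K N S p) :
    T.Undecided K N S (T.restrict p) := fun m hm hmn => by
  rw [← T.anc_succ hmn (hmn.trans (Nat.le_succ n))]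
  exact h m hm _

theorem Undecided.of_restrict {n : ℕ} {p : T.Pos (n + 1)} (h : T.Undecided K N S (T.restrict p))
    (hp₂ : p ∉ T.attractor true S (n + 1)) (hp₁ : p ∉ T.attractor false (T.goal K N S) (n + 1)) :
    T.Undecided K N S p := fun m hm hmn => by
  obtain rfl | hmn' := hmn.eq_or_lt
  · rw [anc_self]
    exact ⟨hp₂, hp₁⟩
  · rw [T.anc_succ (by lia)]
    exact h m hm _

theorem Undecided.exists_succ {n : ℕ} {p : T.Pos n} (hn : K + 1 ≤ n) (h : T.Undecided K N S p) :
    ∃ q, T.restrict q = p ∧ T.Undecided K N S q := by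
  obtain ⟨hp₂, hp₁⟩ := h n hn le_rfl
  rw [anc_self] at hp₂ hp₁
  cases hbodd : n.bodd with
  | false =>
    obtain ⟨q, rfl, hq⟩ := exists_notMem_attractor (by simp [hbodd]) hp₂
    exact ⟨q, rfl, h.of_restrict hq fun hq₁ => hp₁ (restrict_mem_attractor hbodd hq₁)⟩
  | true =>
    obtain ⟨q, rfl, hq⟩ := exists_notMem_attractor (by simp [hbodd]) hp₁
    exact ⟨q, rfl, h.of_restrict (fun hq₂ => hp₂ (restrict_mem_attractor hbodd hq₂)) hq⟩

theorem undecided_of_notMem {p : T.Pos (K + 1)} (hp₂ : p ∉ T.attractor true S (K + 1))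
    (hp₁ : p ∉ T.attractor false (T.goal K N S) (K + 1)) : T.Undecided K N S p := by
  intro m hm hmn
  obtain rfl := le_antisymm hmn hm
  rw [anc_self]
  exact ⟨hp₂, hp₁⟩

namespace Legal

variable {n : ℕ} {p : T.Pos n} {c : Option T.Node}

theorem claim_eq_bot (h : T.Legal K N p S c) (hn : n ≤ K) : S = ⊥ := by
  cases h with
  | bare => rfl
  | claimed | accepted | targeted => lia

theorem target_eq_none (h : T.Legal K N p S c) (hn : n ≤ K + 1) : c = none := by
  cases h with
  | bare | claimed => rfl
  | accepted | targeted => lia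

theorem anc_notMem (h : T.Legal K N p S c) (hn : K + 1 ≤ n) :
    T.anc hn p ∉ T.attractor true S (K + 1) := by
  cases h with
  | bare => lia
  | claimed hn' h => subst hn'; rwa [anc_self]
  | accepted _ h => exact (h _ le_rfl hn).1
  | targeted _ _ h => exact h

theorem undecided (h : T.Legal K N p S none) (hn : K + 2 ≤ n) : T.Undecided K N S p := by
  cases h with
  | bare | claimed => lia
  | accepted _ h => exact h

theorem mem_goal {u : T.Node} (h : T.Legal K N p S (some u)) : u.2 ∈ T.goal K N S u.1 := by
  cases h with
  | targeted _ _ _ h => exact h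

theorem comparable {u : T.Node} (h : T.Legal K N p S (some u)) : Comparable p u.2 := by
  cases h with
  | targeted _ _ _ _ h => exact h

theorem restrict {q : T.Pos (n + 1)} (h : T.Legal K N q S c) :
    T.Legal K N (T.restrict q) (T.claimAt K n S) (T.targetAt K n c) := by
  obtain hn | hn := le_or_gt n K
  · rw [claimAt_of_le hn, targetAt_of_le (by lia)]
    exact .bare hn
  rw [claimAt_of_lt hn]
  obtain hn' | hn' := le_or_gt n (K + 1)
  · obtain rfl : n = K + 1 := by lia
    have hq := h.anc_notMem (Nat.le_succ _)
    rw [targetAt_of_le le_rfl]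
    rw [T.anc_succ le_rfl, anc_self] at hq
    exact .claimed rfl hq
  rw [targetAt_of_lt hn']
  cases h with
  | bare | claimed => lia
  | accepted _ h => exact .accepted hn' h.restrict
  | targeted _ _ h hu huq =>
    rw [T.anc_succ hn] at h
    exact .targeted hn hn' h hu huq.restrict

theorem exists_succ_of_claimed {p : T.Pos (K + 1)}
    (hp : p ∉ T.attractor true S (K + 1)) : ∃ q c, T.Legal K N q S c ∧ T.restrict q = p := by
  by_cases hp₁ : p ∈ T.attractor false (T.goal K N S) (K + 1)
  · obtain ⟨m, hm, u, hup, hu⟩ := exists_extension_of_mem_attractor hp₁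
    obtain ⟨q, rfl, hq⟩ := Comparable.exists_succ (p := p) (q := u)
      ⟨fun _ => hup, fun h => absurd hu.1 (by lia)⟩
    refine ⟨q, some ⟨m, u⟩, .targeted (by lia) le_rfl ?_ hu hq, rfl⟩
    rwa [T.anc_succ le_rfl, anc_self]
  · obtain ⟨q, rfl, hq⟩ := (undecided_of_notMem hp hp₁).exists_succ le_rfl
    exact ⟨q, none, .accepted le_rfl hq, rfl⟩

theorem exists_succ (h : T.Legal K N p S c) :
    ∃ q S' c', T.Legal K N q S' c' ∧ T.restrict q = p ∧ T.claimAt K n S' = S ∧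
      T.targetAt K n c' = c := by
  cases h with
  | bare hn =>
    obtain ⟨q, hq⟩ := T.restrict_surjective n p
    refine ⟨q, ⊥, none, ?_, hq, claimAt_of_le hn, targetAt_none⟩
    obtain rfl | hn := hn.eq_or_lt
    · exact .claimed rfl (by rw [attractor_bot]; exact id)
    · exact .bare hn
  | claimed hn hp =>
    subst hn
    obtain ⟨q, c, hqc, hq⟩ := exists_succ_of_claimed (N := N) hp
    exact ⟨q, S, c, hqc, hq, claimAt_of_lt (by lia), targetAt_of_le le_rfl⟩
  | accepted hn hp =>
    obtain ⟨q, hq, hqu⟩ := hp.exists_succ (by lia)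
    exact ⟨q, S, none, .accepted (by lia) hqu, hq, claimAt_of_lt (by lia), targetAt_none⟩
  | targeted hn hn' hp hu hpu =>
    obtain ⟨q, rfl, hq⟩ := hpu.exists_succ
    rw [← T.anc_succ hn (by lia)] at hp
    exact ⟨q, S, _, .targeted _ (by lia) hp hu hq, rfl, claimAt_of_lt (by lia),
      targetAt_of_lt (by lia)⟩

end Legal

variable (T K N) in
/-- A position of the auxiliary game: a position of `T`, the claim of player I and the answer of
player II. -/
@[ext]
structure AuxPos (n : ℕ) where
  pos : T.Pos n
  claim : T.PosSet
  target : Option T.Node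
  legal : T.Legal K N pos claim target

variable (T K N) in
/-- The tree of the auxiliary game. -/
noncomputable abbrev auxTree : GameTree.{u} where
  Pos := T.AuxPos K N
  restrict {n} t := ⟨T.restrict t.pos, T.claimAt K n t.claim, T.targetAt K n t.target,
    t.legal.restrict⟩
  restrict_surjective _ t := by
    obtain ⟨q, S, c, h, hq, hS, hc⟩ := t.legal.exists_succ
    exact ⟨⟨q, S, c, h⟩, AuxPos.ext hq hS hc⟩

/-- The only position of the auxiliary game of level at most `K` that lies above `p`. -/
def AuxPos.bare {n : ℕ} (hn : n ≤ K) (p : T.Pos n) : T.AuxPos K N n := ⟨p, ⊥, none, .bare hn⟩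

theorem AuxPos.eq_bare {n : ℕ} (hn : n ≤ K) (t : T.AuxPos K N n) : t = bare hn t.pos :=
  AuxPos.ext rfl (t.legal.claim_eq_bot hn) (t.legal.target_eq_none (hn.trans (Nat.le_succ K)))

end Auxiliary

section FirstHit

variable {T : GameTree.{u}} {D : T.PosSet}

open Classical in
/-- The first ancestor of a position that lies in `D`, if there is one. -/
noncomputable def firstHit (D : T.PosSet) {n : ℕ} (p : T.Pos n) : Option T.Node :=
  if h : ∃ m, ∃ hm : m ≤ n, T.anc hm p ∈ D m then
    some ⟨Nat.find h, T.anc (Nat.find_spec h).1 p⟩ else none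

variable {x : ∀ n, T.Pos n} (hx : T.IsBranch x)
include hx

theorem IsBranch.firstHit_eq_none {n : ℕ} (h : ∀ m ≤ n, x m ∉ D m) :
    firstHit D (x n) = none := by
  refine dif_neg ?_
  rintro ⟨m, hm, hD⟩
  exact h m hm (hx.anc hm ▸ hD)

theorem IsBranch.firstHit_eq_some {m n : ℕ} (hmn : m ≤ n) (hD : x m ∈ D m)
    (hfirst : ∀ k < m, x k ∉ D k) : firstHit D (x n) = some ⟨m, x m⟩ := by
  classical
  have hex : ∃ m, ∃ hm : m ≤ n, T.anc hm (x n) ∈ D m := ⟨m, hmn, by rwa [hx.anc]⟩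
  have hfind : Nat.find hex = m := (Nat.find_eq_iff hex).2
    ⟨⟨hmn, by rwa [hx.anc]⟩, fun k hk ⟨hkn, hkD⟩ => hfirst k hk (hx.anc hkn ▸ hkD)⟩
  rw [firstHit, dif_pos hex, hx.anc]
  exact hfind ▸ rfl

end FirstHit

section PushedStrategies

variable {T : GameTree.{u}} {K : ℕ} {N S : T.PosSet} {c : Option T.Node}

theorem pos_move (σ : Strategy (T.auxTree K N)) {n : ℕ} (t : T.AuxPos K N n) :
    T.restrict (AuxPos.pos (σ.move t)) = t.pos := congrArg AuxPos.pos (σ.restrict_move t)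

theorem claim_move (σ : Strategy (T.auxTree K N)) {n : ℕ} (hn : K < n) (t : T.AuxPos K N n) :
    AuxPos.claim (σ.move t) = t.claim :=
  (claimAt_of_lt hn).symm.trans (congrArg AuxPos.claim (σ.restrict_move t))

theorem target_move (σ : Strategy (T.auxTree K N)) {n : ℕ} (hn : K + 1 < n)
    (t : T.AuxPos K N n) : AuxPos.target (σ.move t) = t.target :=
  (targetAt_of_lt hn).symm.trans (congrArg AuxPos.target (σ.restrict_move t))

open Classical in
/-- The move at `p` of a strategy of the auxiliary game, under the assumption that the claim is `S`
and the answer is `c`. Where this assumption is illegal, the move of `w` is played. -/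
noncomputable def simulate (σ : Strategy (T.auxTree K N)) (S : T.PosSet) (c : Option T.Node)
    (w : Strategy T) {n : ℕ} (p : T.Pos n) : T.Pos (n + 1) :=
  if h : T.Legal K N p (T.claimAt K n S) (T.targetAt K n c) then
    AuxPos.pos (σ.move ⟨p, _, _, h⟩) else w.move p

section Simulate

variable (σ : Strategy (T.auxTree K N)) (w : Strategy T) {n : ℕ} {p : T.Pos n}

theorem restrict_simulate : T.restrict (simulate σ S c w p) = p := by
  unfold simulate
  split_ifs with h
  · exact pos_move σ _
  · exact w.restrict_move p

theorem simulate_pos {t : T.AuxPos K N n} (hS : T.claimAt K n S = t.claim)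
    (hc : T.targetAt K n c = t.target) : simulate σ S c w t.pos = AuxPos.pos (σ.move t) := by
  obtain ⟨p, S', c', h⟩ := t
  subst hS hc
  exact dif_pos h

theorem simulate_of_not_legal (h : ¬ T.Legal K N p (T.claimAt K n S) (T.targetAt K n c)) :
    simulate σ S c w p = w.move p := dif_neg h

theorem simulate_of_le (hn : n ≤ K) :
    simulate σ S c w p = AuxPos.pos (σ.move (.bare hn p)) :=
  simulate_pos σ w (t := .bare hn p) (claimAt_of_le hn) (targetAt_of_le (by lia))

theorem simulate_congr {σ τ : Strategy (T.auxTree K N)} (h : σ.AgreeUpTo n τ) :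
    simulate σ S c w p = simulate τ S c w p := by
  simp only [simulate, h n le_rfl]

end Simulate

/-- The claim made by a strategy of player I on the way to `p`. -/
noncomputable def claimOf (σ : Strategy (T.auxTree K N)) {n : ℕ} (p : T.Pos n) : T.PosSet :=
  if h : K ≤ n then AuxPos.claim (σ.move (.bare le_rfl (T.anc h p))) else ⊥

/-- The strategy on `T` of player I obtained from a strategy `σ` of the auxiliary game. As long as
`goal` has not been reached, player I assumes that player II accepts the claim, and afterwards that
the first position in `goal` was the target. When player II leaves the rules for accepted claims,
`goal` can be forced. -/
@[simps]
noncomputable def pushFirst (σ : Strategy (T.auxTree K N)) : Strategy T where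
  move p := simulate σ (claimOf σ p) (firstHit (T.goal K N (claimOf σ p)) p)
    (T.attractorStrategy false (T.goal K N (claimOf σ p))) p
  restrict_move _ := restrict_simulate σ _

/-- A strategy of player II answers the claim `S` at `v` by the target `u`. -/
def Provokes (σ : Strategy (T.auxTree K N)) (v : T.Pos (K + 1)) (S : T.PosSet) (u : T.Node) :
    Prop :=
  ∃ h, AuxPos.target (σ.move ⟨v, S, none, h⟩) = some u

/-- The positions that a strategy of player II may name as targets at `v`. -/
def answers (σ : Strategy (T.auxTree K N)) (v : T.Pos (K + 1)) : T.PosSet := fun m =>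
  {u | ∃ S, Provokes σ v S ⟨m, u⟩}

/-- A claim at `v` for which the answer `c` of a strategy of player II is possible. -/
noncomputable def claimAnsweredBy (σ : Strategy (T.auxTree K N)) (v : T.Pos (K + 1)) :
    Option T.Node → T.PosSet
  | none => answers σ v
  | some u => Classical.epsilon fun S => Provokes σ v S u

theorem provokes_claimAnsweredBy {σ : Strategy (T.auxTree K N)} {v : T.Pos (K + 1)} {m : ℕ}
    {u : T.Pos m} (h : u ∈ answers σ v m) :
    Provokes σ v (claimAnsweredBy σ v (some ⟨m, u⟩)) ⟨m, u⟩ :=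
  Classical.epsilon_spec h

/-- The targets that a strategy of player II may have named on the way to `p`. -/
def answersAt (σ : Strategy (T.auxTree K N)) {n : ℕ} (p : T.Pos n) : T.PosSet :=
  if h : K + 1 ≤ n then answers σ (T.anc h p) else ⊥

/-- The claim that player II assumes at `p` when the answer is assumed to be `c`. -/
noncomputable def assumedClaim (σ : Strategy (T.auxTree K N)) {n : ℕ} (p : T.Pos n)
    (c : Option T.Node) : T.PosSet :=
  if h : K + 1 ≤ n then claimAnsweredBy σ (T.anc h p) c else ⊥

/-- The strategy on `T` of player II obtained from a strategy `σ` of the auxiliary game. As long as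
no possible target has been reached, player II assumes that the claim consists of all possible
targets, which `σ` has to accept, and afterwards that the claim was one that provoked the first
target reached. When player I leaves the rules for accepted claims, a possible target can be
forced. -/
@[simps]
noncomputable def pushSecond (σ : Strategy (T.auxTree K N)) : Strategy T where
  move p := simulate σ (assumedClaim σ p (firstHit (answersAt σ p) p)) (firstHit (answersAt σ p) p)
    (T.attractorStrategy true (answersAt σ p)) p
  restrict_move _ := restrict_simulate σ _

/-- The strategy on `T` of player `b` obtained from a strategy of the auxiliary game. -/
noncomputable def push : Player → Strategy (T.auxTree K N) → Strategy T
  | false, σ => pushFirst σ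
  | true, σ => pushSecond σ

theorem push_move_of_le {b : Player} (σ : Strategy (T.auxTree K N)) {n : ℕ} (hn : n ≤ K)
    (p : T.Pos n) : (push b σ).move p = AuxPos.pos (σ.move (.bare hn p)) :=
  match b with
  | false | true => simulate_of_le σ _ hn

theorem agreeUpTo_push {b : Player} {σ τ : Strategy (T.auxTree K N)} {n : ℕ}
    (h : σ.AgreeUpTo n τ) : (push b σ).AgreeUpTo n (push b τ) := by
  intro m hm p
  cases b with
  | false =>
    have hclaim : claimOf σ p = claimOf τ p := by
      unfold claimOf
      split_ifs with hK
      · rw [h K (hK.trans hm)]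
      · rfl
    simp only [push, pushFirst_move, hclaim, simulate_congr _ (h.mono hm)]
  | true =>
    have hprovokes (hK : K + 1 ≤ m) : Provokes σ = Provokes τ := by
      funext v S u
      simp only [Provokes, h (K + 1) (hK.trans hm)]
    have hanswers (hK : K + 1 ≤ m) : answers σ = answers τ := by
      funext v m
      simp only [answers, hprovokes hK]
    have hanswersAt : answersAt σ p = answersAt τ p := by
      unfold answersAt
      split_ifs with hK
      · rw [hanswers hK]
      · rfl
    have hclaim : assumedClaim σ p = assumedClaim τ p := by
      funext c
      unfold assumedClaim
      split_ifs with hK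
      · cases c <;> simp only [claimAnsweredBy, hanswers hK, hprovokes hK]
      · rfl
    simp only [push, pushSecond_move, hanswersAt, hclaim, simulate_congr _ (h.mono hm)]

end PushedStrategies

section Lift

variable {T : GameTree.{u}} {K : ℕ} {N S : T.PosSet} {c : Option T.Node} {b : Player}
  {σ : Strategy (T.auxTree K N)} {x : ∀ n, T.Pos n}

/-- The play of the auxiliary game with given moves, claim and answer. -/
noncomputable def annotate (x : ∀ n, T.Pos n)
    (h : ∀ n, T.Legal K N (x n) (T.claimAt K n S) (T.targetAt K n c)) (n : ℕ) :
    T.AuxPos K N n :=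
  ⟨x n, _, _, h n⟩

theorem annotate_of_le (h : ∀ n, T.Legal K N (x n) (T.claimAt K n S) (T.targetAt K n c)) {n : ℕ}
    (hn : n ≤ K) : annotate x h n = .bare hn (x n) := AuxPos.eq_bare hn _

theorem annotate_succ (h : ∀ n, T.Legal K N (x n) (T.claimAt K n S) (T.targetAt K n c))
    (h₁ : T.Legal K N (x (K + 1)) S none) :
    annotate x h (K + 1) = ⟨x (K + 1), S, none, h₁⟩ :=
  AuxPos.ext rfl (claimAt_of_lt (Nat.lt_succ_self K)) (targetAt_of_le le_rfl)

theorem isBranch_annotate (hx : T.IsBranch x)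
    (h : ∀ n, T.Legal K N (x n) (T.claimAt K n S) (T.targetAt K n c)) :
    (T.auxTree K N).IsBranch (annotate x h) :=
  fun n => AuxPos.ext (hx n) claimAt_claimAt_succ targetAt_targetAt_succ

theorem follows_annotate (h : ∀ n, T.Legal K N (x n) (T.claimAt K n S) (T.targetAt K n c))
    (hpos : ∀ n, n.bodd = b → x (n + 1) = AuxPos.pos (σ.move (annotate x h n)))
    (hclaim : K.bodd = b → AuxPos.claim (σ.move (annotate x h K)) = S)
    (htarget : (K + 1).bodd = b → AuxPos.target (σ.move (annotate x h (K + 1))) = c) :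
    σ.Follows b (annotate x h) := by
  intro n _ hn
  refine AuxPos.ext (hpos n hn) ?_ ?_
  · obtain hnK | rfl | hnK := lt_trichotomy n K
    · exact (claimAt_of_le hnK).trans (AuxPos.legal (σ.move _) |>.claim_eq_bot hnK).symm
    · exact (claimAt_of_lt (Nat.lt_succ_self n)).trans (hclaim hn).symm
    · rw [claim_move σ hnK]
      exact (claimAt_of_lt (hnK.trans (Nat.lt_succ_self n))).trans (claimAt_of_lt hnK).symm
  · obtain hnK | rfl | hnK := lt_trichotomy n (K + 1)
    · exact (targetAt_of_le hnK).trans (AuxPos.legal (σ.move _) |>.target_eq_none hnK).symm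
    · exact (targetAt_of_lt (Nat.lt_succ_self _)).trans (htarget hn).symm
    · rw [target_move σ hnK]
      exact (targetAt_of_lt (hnK.trans (Nat.lt_succ_self n))).trans (targetAt_of_lt hnK).symm

theorem legal_of_undecided (h₁ : x (K + 1) ∉ T.attractor true S (K + 1))
    (h : ∀ n, K + 2 ≤ n → T.Undecided K N S (x n)) (n : ℕ) :
    T.Legal K N (x n) (T.claimAt K n S) (T.targetAt K n none) := by
  rw [targetAt_none]
  obtain hn | rfl | hn := lt_trichotomy n (K + 1)
  · rw [claimAt_of_le (Nat.lt_succ_iff.1 hn)]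
    exact .bare (Nat.lt_succ_iff.1 hn)
  · rw [claimAt_of_lt (Nat.lt_succ_self K)]
    exact .claimed rfl h₁
  · rw [claimAt_of_lt (by lia)]
    exact .accepted hn (h n hn)

theorem IsBranch.legal_of_mem_goal (hx : T.IsBranch x) {m : ℕ}
    (h₁ : x (K + 1) ∉ T.attractor true S (K + 1)) (hm : x m ∈ T.goal K N S m) (n : ℕ) :
    T.Legal K N (x n) (T.claimAt K n S) (T.targetAt K n (some ⟨m, x m⟩)) := by
  obtain hn | rfl | hn := lt_trichotomy n (K + 1)
  · rw [claimAt_of_le (Nat.lt_succ_iff.1 hn), targetAt_of_le hn.le]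
    exact .bare (Nat.lt_succ_iff.1 hn)
  · rw [claimAt_of_lt (Nat.lt_succ_self K), targetAt_of_le le_rfl]
    exact .claimed rfl h₁
  · rw [claimAt_of_lt (by lia), targetAt_of_lt hn]
    exact .targeted hn.le hn (by rwa [hx.anc]) hm (hx.comparable n m)

/-- On the way to a target all moves are forced. -/
theorem IsBranch.pos_move_of_target (hx : T.IsBranch x) {m n : ℕ} {t : T.AuxPos K N n}
    (hnm : n < m) (h : AuxPos.target (σ.move t) = some ⟨m, x m⟩) :
    AuxPos.pos (σ.move t) = x (n + 1) := by
  have hlegal := AuxPos.legal (σ.move t)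
  rw [h] at hlegal
  exact (hlegal.comparable.1 hnm).symm.trans (hx.anc hnm)

theorem undecided_pos_move {n : ℕ} (hn : K + 1 ≤ n) {t : T.AuxPos K N n}
    (h : AuxPos.target (σ.move t) = none) :
    T.Undecided K N t.claim (AuxPos.pos (σ.move t)) := by
  have hlegal := AuxPos.legal (σ.move t)
  rw [h, claim_move σ hn] at hlegal
  exact hlegal.undecided (Nat.succ_le_succ hn)

variable (σ b x) in
/-- The branch `x` can be annotated to a play of the auxiliary game in which player `b` follows
`σ`. -/
def HasLift : Prop :=
  ∃ y, (T.auxTree K N).IsBranch y ∧ σ.Follows b y ∧ ∀ n, AuxPos.pos (y n) = x n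

theorem IsBranch.hasLift_of_mem_goal (hx : T.IsBranch x) {m : ℕ}
    (h₁ : x (K + 1) ∉ T.attractor true S (K + 1)) (hm : x m ∈ T.goal K N S m)
    (hclaim : K.bodd = b → AuxPos.claim (σ.move (.bare le_rfl (x K))) = S)
    (htarget : (K + 1).bodd = b →
      AuxPos.target (σ.move ⟨x (K + 1), S, none, .claimed rfl h₁⟩) = some ⟨m, x m⟩)
    (hlow : ∀ n, ∀ hn : n ≤ K, n.bodd = b → x (n + 1) = AuxPos.pos (σ.move (.bare hn (x n))))
    (hhigh : ∀ n, m ≤ n → n.bodd = b →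
      x (n + 1) = AuxPos.pos (σ.move (annotate x (hx.legal_of_mem_goal h₁ hm) n))) :
    HasLift b σ x := by
  set h := hx.legal_of_mem_goal h₁ hm
  have htarget' (hb : (K + 1).bodd = b) :
      AuxPos.target (σ.move (annotate x h (K + 1))) = some ⟨m, x m⟩ := by
    rw [annotate_succ h (.claimed rfl h₁), htarget hb]
  refine ⟨_, isBranch_annotate hx h, follows_annotate h (fun n hn => ?_) ?_ htarget', fun n => rfl⟩
  · obtain hnm | hnm := le_or_gt m n
    · exact hhigh n hnm hn
    obtain hnK | rfl | hnK := lt_trichotomy n (K + 1)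
    · rw [annotate_of_le h (Nat.lt_succ_iff.1 hnK)]
      exact hlow n _ hn
    · exact (hx.pos_move_of_target hnm (htarget' hn)).symm
    · refine (hx.pos_move_of_target hnm ?_).symm
      exact (target_move σ hnK _).trans (targetAt_of_lt hnK)
  · rw [annotate_of_le h le_rfl]
    exact hclaim

theorem exists_first_mem {D : T.PosSet} (h : ∃ m, x m ∈ D m) :
    ∃ m, x m ∈ D m ∧ ∀ k < m, x k ∉ D k := by
  classical exact ⟨Nat.find h, Nat.find_spec h, fun k => Nat.find_min h⟩

theorem odd_level (hK : K.bodd = false) : (K + 1).bodd = true := by simp [hK]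

section First

theorem notMem_attractor_goal (hK : K.bodd = false) (hx : T.IsBranch x)
    (hno : ∀ n, x n ∉ T.goal K N S n)
    (hmove : ∀ n, K ≤ n → n.bodd = false →
      x (n + 1) = simulate σ S none (T.attractorStrategy false (T.goal K N S)) (x n))
    {m : ℕ} (hm : K + 1 ≤ m) : x m ∉ T.attractor false (T.goal K N S) m := by
  intro hmem
  obtain ⟨n, -, hn⟩ := hx.exists_mem_of_attractorStrategy hmem fun n hmn hn => by
    have hnK : K + 1 < n := (hm.trans hmn).lt_of_ne fun h => by simp [← h, hK] at hn
    refine (hmove n (by lia) hn).trans (simulate_of_not_legal σ _ fun hlegal => ?_)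
    rw [claimAt_of_lt (by lia), targetAt_none] at hlegal
    exact (hlegal.undecided hnK m hm hmn).2 (by rwa [hx.anc])
  exact hno n hn

theorem undecided_of_simulate_first (hK : K.bodd = false) (hx : T.IsBranch x)
    (h₁ : x (K + 1) ∉ T.attractor true S (K + 1)) (hno : ∀ n, x n ∉ T.goal K N S n)
    (hmove : ∀ n, K ≤ n → n.bodd = false →
      x (n + 1) = simulate σ S none (T.attractorStrategy false (T.goal K N S)) (x n))
    {n : ℕ} (hn : K + 1 ≤ n) : T.Undecided K N S (x n) := by
  have hgoal {m : ℕ} (hm : K + 1 ≤ m) := notMem_attractor_goal hK hx hno hmove hm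
  induction n, hn using Nat.le_induction with
  | base => exact undecided_of_notMem h₁ (hgoal le_rfl)
  | succ n hn ih =>
    cases hbodd : n.bodd with
    | false =>
      have hnK : K + 1 < n := hn.lt_of_ne fun h => by simp [← h, hK] at hbodd
      let t : T.AuxPos K N n := ⟨x n, S, none, .accepted hnK ih⟩
      have hpos := (hmove n (by lia) hbodd).trans <|
        simulate_pos σ _ (t := t) (claimAt_of_lt (by lia)) targetAt_none
      rw [hpos]
      exact undecided_pos_move hn (target_move σ hnK t)
    | true =>
      refine Undecided.of_restrict (by rwa [hx]) (fun h => ?_) (hgoal (by lia))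
      have hxn := hx n ▸ restrict_mem_attractor hbodd h
      exact (ih n hn le_rfl).1 (by rwa [anc_self])

theorem hasLift_of_follows_pushFirst (hK : K.bodd = false) (hx : T.IsBranch x)
    (hσ : (pushFirst σ).Follows false x) : HasLift false σ x := by
  set S := AuxPos.claim (σ.move (.bare le_rfl (x K)))
  have hlow (n : ℕ) (hn : n ≤ K) (hbodd : n.bodd = false) :
      x (n + 1) = AuxPos.pos (σ.move (.bare hn (x n))) :=
    (hσ n (Nat.zero_le n) hbodd).trans (simulate_of_le σ _ hn)
  have hmove (n : ℕ) (hn : K ≤ n) (hbodd : n.bodd = false) :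
      x (n + 1) = simulate σ S (firstHit (T.goal K N S) (x n))
        (T.attractorStrategy false (T.goal K N S)) (x n) := by
    have hclaim : claimOf σ (x n) = S := by rw [claimOf, dif_pos hn, hx.anc]
    rw [hσ n (Nat.zero_le n) hbodd, pushFirst_move, hclaim]
  have h₁ : x (K + 1) ∉ T.attractor true S (K + 1) := by
    have h := AuxPos.legal (σ.move (.bare le_rfl (x K))) |>.anc_notMem le_rfl
    rwa [anc_self, ← hlow K le_rfl hK] at h
  by_cases hhit : ∃ m, x m ∈ T.goal K N S m
  · obtain ⟨m, hm, hfirst⟩ := exists_first_mem hhit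
    refine hx.hasLift_of_mem_goal h₁ hm (fun _ => rfl) (by simp [hK]) hlow fun n hmn hn => ?_
    rw [hmove n (by have := hm.1; lia) hn, hx.firstHit_eq_some hmn hm hfirst]
    exact simulate_pos σ _ (t := annotate x _ n) rfl rfl
  · push Not at hhit
    have hmove' (n : ℕ) (hn : K ≤ n) (hbodd : n.bodd = false) : x (n + 1) =
        simulate σ S none (T.attractorStrategy false (T.goal K N S)) (x n) := by
      rw [hmove n hn hbodd, hx.firstHit_eq_none fun m _ => hhit m]
    have hlegal := legal_of_undecided h₁ fun n hn =>
      undecided_of_simulate_first hK hx h₁ hhit hmove' ((Nat.le_succ _).trans hn)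
    refine ⟨_, isBranch_annotate hx hlegal, follows_annotate hlegal (fun n hn => ?_) (fun _ => ?_)
      (by simp [hK]), fun n => rfl⟩
    · obtain hnK | hnK := le_or_gt n K
      · rw [annotate_of_le hlegal hnK]
        exact hlow n hnK hn
      · exact (hmove' n hnK.le hn).trans (simulate_pos σ _ (t := annotate x hlegal n) rfl rfl)
    · rw [annotate_of_le hlegal le_rfl]

end First

section Second

theorem Provokes.mem_goal {v : T.Pos (K + 1)} {u : T.Node} (h : Provokes σ v S u) :
    u.2 ∈ T.goal K N S u.1 := by
  obtain ⟨h₁, h⟩ := h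
  have hlegal := AuxPos.legal (σ.move ⟨v, S, none, h₁⟩)
  rw [h, claim_move σ (Nat.lt_succ_self K)] at hlegal
  exact hlegal.mem_goal

theorem notMem_attractor_answers (hx : T.IsBranch x)
    (hno : ∀ n, x n ∉ answers σ (x (K + 1)) n)
    (hmove : ∀ n, K + 1 ≤ n → n.bodd = true → x (n + 1) = simulate σ (answers σ (x (K + 1))) none
      (T.attractorStrategy true (answers σ (x (K + 1)))) (x n))
    {m : ℕ} (hm : K + 1 ≤ m) : x m ∉ T.attractor true (answers σ (x (K + 1))) m := by
  intro hmem
  obtain ⟨n, -, hn⟩ := hx.exists_mem_of_attractorStrategy hmem fun n hmn hn => by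
    refine (hmove n (hm.trans hmn) hn).trans (simulate_of_not_legal σ _ fun hlegal => ?_)
    rw [claimAt_of_lt (by lia), targetAt_none] at hlegal
    obtain rfl | hnK := (hm.trans hmn).eq_or_lt
    · obtain rfl := le_antisymm hm hmn
      exact hlegal.anc_notMem le_rfl (by rwa [anc_self])
    · exact (hlegal.undecided hnK m hm hmn).1 (by rwa [hx.anc])
  exact hno n hn

/-- Any target provoked by the claim of all possible targets would itself be claimed. -/
theorem target_move_answers {v : T.Pos (K + 1)} (h : T.Legal K N v (answers σ v) none) :
    AuxPos.target (σ.move ⟨v, answers σ v, none, h⟩) = none := by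
  refine Option.eq_none_iff_forall_ne_some.2 fun u hu => ?_
  have hprovokes : Provokes σ v (answers σ v) u := ⟨h, hu⟩
  exact hprovokes.mem_goal.2.2 (subset_attractor _ ⟨_, hprovokes⟩)

theorem undecided_of_simulate_second (hK : K.bodd = false) (hx : T.IsBranch x)
    (hno : ∀ n, x n ∉ answers σ (x (K + 1)) n)
    (hmove : ∀ n, K + 1 ≤ n → n.bodd = true → x (n + 1) = simulate σ (answers σ (x (K + 1))) none
      (T.attractorStrategy true (answers σ (x (K + 1)))) (x n))
    {n : ℕ} (hn : K + 2 ≤ n) : T.Undecided K N (answers σ (x (K + 1))) (x n) := by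
  have hanswers {m : ℕ} (hm : K + 1 ≤ m) := notMem_attractor_answers hx hno hmove hm
  induction n, hn using Nat.le_induction with
  | base =>
    have hlegal : T.Legal K N (x (K + 1)) _ none := .claimed rfl (hanswers le_rfl)
    have hpos := (hmove (K + 1) le_rfl (odd_level hK)).trans <| simulate_pos σ _
      (t := ⟨_, _, _, hlegal⟩) (claimAt_of_lt (Nat.lt_succ_self K)) targetAt_none
    rw [hpos]
    exact undecided_pos_move le_rfl (target_move_answers hlegal)
  | succ n hn ih =>
    cases hbodd : n.bodd with
    | false =>
      refine Undecided.of_restrict (by rwa [hx]) (hanswers (by lia)) fun h => ?_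
      have hxn := hx n ▸ restrict_mem_attractor hbodd h
      exact (ih n (by lia) le_rfl).2 (by rwa [anc_self])
    | true =>
      let t : T.AuxPos K N n := ⟨x n, _, none, .accepted hn ih⟩
      have hpos := (hmove n (by lia) hbodd).trans <|
        simulate_pos σ _ (t := t) (claimAt_of_lt (by lia)) targetAt_none
      rw [hpos]
      exact undecided_pos_move ((Nat.le_succ _).trans hn) (target_move σ hn t)

theorem hasLift_of_follows_pushSecond (hK : K.bodd = false) (hx : T.IsBranch x)
    (hσ : (pushSecond σ).Follows true x) : HasLift true σ x := by
  set D := answers σ (x (K + 1)) with hD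
  have hlow (n : ℕ) (hn : n ≤ K) (hbodd : n.bodd = true) :
      x (n + 1) = AuxPos.pos (σ.move (.bare hn (x n))) :=
    (hσ n (Nat.zero_le n) hbodd).trans (simulate_of_le σ _ hn)
  have hmove (n : ℕ) (hn : K + 1 ≤ n) (hbodd : n.bodd = true) :
      x (n + 1) = simulate σ (claimAnsweredBy σ (x (K + 1)) (firstHit D (x n)))
        (firstHit D (x n)) (T.attractorStrategy true D) (x n) := by
    rw [hσ n (Nat.zero_le n) hbodd, pushSecond_move]
    simp only [answersAt, assumedClaim, dif_pos hn, hx.anc, hD]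
  by_cases hhit : ∃ m, x m ∈ D m
  · obtain ⟨m, hm, hfirst⟩ := exists_first_mem hhit
    have hprovokes := provokes_claimAnsweredBy hm
    have hgoal := hprovokes.mem_goal
    obtain ⟨hlegal, htarget⟩ := hprovokes
    have h₁ := hlegal.anc_notMem le_rfl
    rw [anc_self] at h₁
    refine hx.hasLift_of_mem_goal h₁ hgoal (by simp [hK]) (fun _ => htarget) hlow
      fun n hmn hn => ?_
    rw [hmove n (by have := hgoal.1; lia) hn, hx.firstHit_eq_some hmn hm hfirst]
    exact simulate_pos σ _ (t := annotate x _ n) rfl rfl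
  · push Not at hhit
    have hmove' (n : ℕ) (hn : K + 1 ≤ n) (hbodd : n.bodd = true) :
        x (n + 1) = simulate σ D none (T.attractorStrategy true D) (x n) := by
      rw [hmove n hn hbodd, hx.firstHit_eq_none fun m _ => hhit m]
      rfl
    have h₁ := notMem_attractor_answers hx hhit hmove' le_rfl
    have hlegal := legal_of_undecided h₁ fun n hn =>
      undecided_of_simulate_second hK hx hhit hmove' hn
    refine ⟨_, isBranch_annotate hx hlegal, follows_annotate hlegal (fun n hn => ?_) (by simp [hK])
      (fun _ => ?_), fun n => rfl⟩
    · obtain hnK | hnK := le_or_gt n K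
      · rw [annotate_of_le hlegal hnK]
        exact hlow n hnK hn
      · exact (hmove' n hnK hn).trans (simulate_pos σ _ (t := annotate x hlegal n) rfl rfl)
    · rw [annotate_succ hlegal (.claimed rfl h₁)]
      exact target_move_answers _

end Second

variable (T N) in
/-- The covering of a tree by its auxiliary tree. -/
noncomputable def auxCovering (hK : K.bodd = false) : Covering K (T.auxTree K N) T where
  π := ⟨AuxPos.pos, fun _ => rfl⟩
  φ := push
  agreeUpTo_φ := agreeUpTo_push
  exists_lift {b} _ _ hx hσ :=
    match b with
    | false => hasLift_of_follows_pushFirst hK hx hσ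
    | true => hasLift_of_follows_pushSecond hK hx hσ
  bijective_π n hn := by
    refine ⟨fun s t (hst : AuxPos.pos s = AuxPos.pos t) => ?_, fun p => ⟨.bare hn p, rfl⟩⟩
    rw [AuxPos.eq_bare hn s, AuxPos.eq_bare hn t, hst]
  φ_move b σ n hn p := by rw [push_move_of_le σ hn.le, ← p.eq_bare hn.le]

theorem target_eq_of_isBranch {y : ∀ n, T.AuxPos K N n} (hy : (T.auxTree K N).IsBranch y) {n : ℕ}
    (hn : K + 2 ≤ n) : (y n).target = (y (K + 2)).target := by
  induction n, hn using Nat.le_induction with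
  | base => rfl
  | succ n hn ih =>
    rw [← ih]
    exact (targetAt_of_lt hn).symm.trans (congrArg AuxPos.target (hy n))

/-- The answer of player II decides whether the play reaches `N`. -/
theorem forall_notMem_iff_target_eq_none (hN : ∀ n p, T.restrict p ∈ N n → p ∈ N (n + 1))
    {y : ∀ n, T.AuxPos K N n} (hy : (T.auxTree K N).IsBranch y) :
    (∀ n, (y n).pos ∉ N n) ↔ (y (K + 2)).target = none := by
  constructor
  · refine fun h => Option.eq_none_iff_forall_ne_some.2 fun u hu => ?_
    have hlegal := (y (K + 2)).legal
    rw [hu] at hlegal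
    have hgoal := hlegal.mem_goal
    have hlegal' := (y u.1).legal
    rw [target_eq_of_isBranch hy hgoal.1, hu] at hlegal'
    have hpos : (y u.1).pos = u.2 := (anc_self ..).symm.trans (hlegal'.comparable.2 le_rfl)
    exact h u.1 (hpos ▸ hgoal.2.1)
  · intro h n hn
    have hmono (m : ℕ) (hm : n ≤ m) : (y m).pos ∈ N m := by
      induction m, hm using Nat.le_induction with
      | base => exact hn
      | succ m _ ih => exact hN m _ (by rwa [← hy m] at ih)
    set m := n + (K + 2)
    have hlegal := (y m).legal
    rw [target_eq_of_isBranch hy (by lia), h] at hlegal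
    obtain ⟨h₂, h₁⟩ := hlegal.undecided (by lia) m (by lia) le_rfl
    rw [anc_self] at h₁ h₂
    exact h₁ (subset_attractor _ ⟨by lia, hmono m (by lia), h₂⟩)

end Lift

/-- The map on branches induced by a homomorphism. -/
def Hom.mapBranch {T' T : GameTree.{u}} (f : Hom T' T) (x : ∀ n, T'.Pos n) (n : ℕ) : T.Pos n :=
  f.map (x n)

theorem Covering.π_comp_limitProj {K : ℕ} {T : ℕ → GameTree.{u}}
    (c : ∀ i, Covering (K + 1 + i) (T (i + 1)) (T i)) (i : ℕ) :
    (c i).π.comp (limitProj c (i + 1)) = limitProj c i := by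
  ext n y
  exact y.2 i

/-! ### Borel determinacy and the lemma of Wadge -/

section Unravelling

variable {T' T : GameTree.{u}}

/-- Membership of a branch in `X` depends only on its position at some fixed level. -/
def IsDecided (T : GameTree.{u}) (X : Set (∀ n, T.Pos n)) : Prop :=
  ∃ (L : ℕ) (C : Set (T.Pos L)), ∀ x, T.IsBranch x → (x ∈ X ↔ x L ∈ C)

theorem IsDecided.compl {X : Set (∀ n, T.Pos n)} (h : T.IsDecided X) : T.IsDecided Xᶜ := by
  obtain ⟨L, C, h⟩ := h
  exact ⟨L, Cᶜ, fun x hx => not_congr (h x hx)⟩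

theorem IsDecided.preimage {X : Set (∀ n, T.Pos n)} (h : T.IsDecided X) (f : Hom T' T) :
    T'.IsDecided (f.mapBranch ⁻¹' X) := by
  obtain ⟨L, C, h⟩ := h
  exact ⟨L, {p | f.map p ∈ C}, fun x hx => h _ (f.isBranch hx)⟩

/-- A countable union of decided sets is an open game, which the auxiliary tree unravels. -/
theorem exists_covering_isDecided_iUnion {X : ℕ → Set (∀ n, T.Pos n)}
    (h : ∀ i, T.IsDecided (X i)) (K : ℕ) :
    ∃ (T' : GameTree.{u}) (c : Covering K T' T), T'.IsDecided (c.π.mapBranch ⁻¹' ⋃ i, X i) := by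
  choose L C h using h
  let N : T.PosSet := fun n => {p | ∃ i, ∃ hi : L i ≤ n, T.anc hi p ∈ C i}
  have hN (n : ℕ) (p : T.Pos (n + 1)) : T.restrict p ∈ N n → p ∈ N (n + 1) :=
    fun ⟨i, hi, hp⟩ => ⟨i, Nat.le_succ_of_le hi, by rwa [anc_succ T hi]⟩
  have hmem {x : ∀ n, T.Pos n} (hx : T.IsBranch x) : x ∉ ⋃ i, X i ↔ ∀ n, x n ∉ N n := by
    simp only [Set.mem_iUnion, not_exists]
    refine ⟨fun hX n ⟨i, hi, hp⟩ => hX i ((h i x hx).2 (by rwa [hx.anc] at hp)),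
      fun hX i hi => hX (L i) ⟨i, le_rfl, ?_⟩⟩
    rw [anc_self]
    exact (h i x hx).1 hi
  have hK : (2 * K).bodd = false := by simp
  refine ⟨T.auxTree (2 * K) N, (auxCovering T N hK).mono (by lia), 2 * K + 2,
    {t | t.target ≠ none}, fun y hy => not_iff_not.1 ?_⟩
  refine (hmem ((auxCovering T N hK).π.isBranch hy)).trans ?_
  exact (forall_notMem_iff_target_eq_none hN hy).trans not_not.symm

/-- Every pullback of `X` can be decided by a covering. Quantifying over the pullbacks makes the
notion closed under countable unions. -/
def Unravelable (T : GameTree.{u}) (X : Set (∀ n, T.Pos n)) : Prop :=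
  ∀ (T' : GameTree.{u}) (f : Hom T' T) (K : ℕ), ∃ (T'' : GameTree.{u}) (c : Covering K T'' T'),
    T''.IsDecided ((f.comp c.π).mapBranch ⁻¹' X)

theorem IsDecided.unravelable {X : Set (∀ n, T.Pos n)} (h : T.IsDecided X) : T.Unravelable X :=
  fun T' _ K => ⟨T', .id K T', h.preimage _⟩

namespace Unravelable

theorem compl {X : Set (∀ n, T.Pos n)} (h : T.Unravelable X) : T.Unravelable Xᶜ := by
  intro T' f K
  obtain ⟨T'', c, hc⟩ := h T' f K
  exact ⟨T'', c, hc.compl⟩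

theorem exists_covering_forall_isDecided {X : ℕ → Set (∀ n, T.Pos n)}
    (h : ∀ i, T.Unravelable (X i)) (f : Hom T' T) (K : ℕ) :
    ∃ (T'' : GameTree.{u}) (c : Covering (K + 1) T'' T'),
      ∀ i, T''.IsDecided ((f.comp c.π).mapBranch ⁻¹' X i) := by
  choose next c hc using fun i (s : (S : GameTree.{u}) × Hom S T) => h i s.1 s.2 (K + 1 + i)
  let stage (i : ℕ) : (S : GameTree.{u}) × Hom S T :=
    Nat.rec ⟨T', f⟩ (fun i s => ⟨next i s, s.2.comp (c i s).π⟩) i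
  let tree (i : ℕ) : GameTree.{u} := (stage i).1
  let g (i : ℕ) : Hom (tree i) T := (stage i).2
  let C (i : ℕ) : Covering (K + 1 + i) (tree (i + 1)) (tree i) := c i (stage i)
  let p (i : ℕ) : Hom (limit (T := tree) C) T := (g i).comp (limitProj (T := tree) C i)
  have hp (i : ℕ) : p i = p 0 := by
    induction i with
    | zero => rfl
    | succ i ih =>
      rw [← ih]
      exact congrArg (g i).comp (Covering.π_comp_limitProj (T := tree) C i)
  refine ⟨limit (T := tree) C, limitCovering (T := tree) C, fun i => ?_⟩
  have hdecided : IsDecided _ ((p (i + 1)).mapBranch ⁻¹' X i) :=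
    (hc i (stage i)).preimage (limitProj (T := tree) C (i + 1))
  exact (congrArg (fun q : Hom _ T => IsDecided _ (q.mapBranch ⁻¹' X i)) (hp (i + 1))).mp hdecided

theorem iUnion {X : ℕ → Set (∀ n, T.Pos n)} (h : ∀ i, T.Unravelable (X i)) :
    T.Unravelable (⋃ i, X i) := by
  intro T' f K
  obtain ⟨S, c, hc⟩ := exists_covering_forall_isDecided h f K
  obtain ⟨T'', d, hd⟩ := exists_covering_isDecided_iUnion hc (K + 1)
  refine ⟨T'', (c.comp d).mono K.le_succ, ?_⟩
  rwa [← Set.preimage_iUnion] at hd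

theorem determined {X : Set (∀ n, T.Pos n)} (h : T.Unravelable X) [Subsingleton (T.Pos 0)] :
    (∃ σ : Strategy T, ∀ x, T.IsBranch x → σ.Follows false x → x ∈ X) ∨
      ∃ σ : Strategy T, ∀ x, T.IsBranch x → σ.Follows true x → x ∉ X := by
  obtain ⟨T', c, L, C, hC⟩ := h T (.id T) 0
  have hmem {x : ∀ n, T.Pos n} {x' : ∀ n, T'.Pos n} (hx' : T'.IsBranch x')
      (hπ : ∀ n, c.π.map (x' n) = x n) : x ∈ X ↔ x' L ∈ C := by
    rw [← hC x' hx', ← funext hπ]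
    rfl
  have : Subsingleton (T'.Pos 0) := (c.bijective_π 0 le_rfl).1.subsingleton
  let A : T'.PosSet := fun n => {p | ∃ h : L ≤ n, T'.anc h p ∈ C}
  by_cases hroot : ∃ r, r ∈ T'.attractor false A 0
  · obtain ⟨r, hr⟩ := hroot
    refine .inl ⟨c.φ false (T'.attractorStrategy false A), fun x hx hσ => ?_⟩
    obtain ⟨x', hx', hσ', hπ⟩ := c.exists_lift hx hσ
    obtain ⟨n, -, hn, hC'⟩ :=
      hx'.exists_mem_of_attractorStrategy (by rwa [Subsingleton.elim (x' 0) r]) hσ'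
    rw [hx'.anc] at hC'
    exact (hmem hx' hπ).2 hC'
  · obtain ⟨τ, hτ⟩ := exists_escapeStrategy T' false A
    refine .inr ⟨c.φ true τ, fun x hx hσ hX => ?_⟩
    obtain ⟨x', hx', hσ', hπ⟩ := c.exists_lift hx hσ
    refine hτ x' hx' hσ' (fun h => hroot ⟨_, h⟩) L (subset_attractor _ ⟨le_rfl, ?_⟩)
    rw [anc_self]
    exact (hmem hx' hπ).1 hX

end Unravelable

end Unravelling

section FullTree

variable {α : Type u} [Nonempty α]

variable (α) in
/-- The tree of all finite sequences in `α`. -/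
def full : GameTree.{u} where
  Pos n := Fin n → α
  restrict := Fin.init
  restrict_surjective _ p := ⟨Fin.snoc p (Classical.arbitrary α), Fin.init_snoc ..⟩

/-- The infinite sequence traced by a branch of the full tree. -/
def outcome (x : ∀ n, (full α).Pos n) (n : ℕ) : α := x (n + 1) (Fin.last n)

theorem IsBranch.apply_eq_outcome {x : ∀ n, (full α).Pos n} (hx : (full α).IsBranch x) {n : ℕ}
    (i : Fin n) : x n i = outcome x i := by
  induction n with
  | zero => exact i.elim0
  | succ n ih =>
    refine Fin.lastCases rfl (fun j => ?_) i
    exact (congrFun (hx n) j).trans (ih j)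

variable [TopologicalSpace α] [DiscreteTopology α]

theorem unravelable_of_isOpen {X : Set (ℕ → α)} (hX : IsOpen X) :
    (full α).Unravelable (outcome ⁻¹' X) := by
  have hcylinder : X = ⋃ n, {z | PiNat.cylinder z n ⊆ X} := by
    ext z
    simp only [Set.mem_iUnion, Set.mem_ofPred_eq]
    refine ⟨fun hz => ?_, fun ⟨n, hn⟩ => hn (PiNat.self_mem_cylinder z n)⟩
    obtain ⟨_, ⟨y, n, rfl⟩, hzy, hsub⟩ :=
      (PiNat.isTopologicalBasis_cylinders fun _ => α).exists_subset_of_mem_open hz hX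
    exact ⟨n, by rwa [PiNat.mem_cylinder_iff_eq.1 hzy]⟩
  rw [hcylinder, Set.preimage_iUnion]
  refine .iUnion fun n => IsDecided.unravelable
    ⟨n, {p | ∀ z : ℕ → α, (∀ i : Fin n, z i = p i) → z ∈ X}, fun x hx => ?_⟩
  simp only [Set.mem_preimage, Set.mem_ofPred_eq, hx.apply_eq_outcome]
  exact ⟨fun h z hz => h fun i hi => hz ⟨i, hi⟩, fun h z hz => h z fun i => hz i i.2⟩

variable [MeasurableSpace (ℕ → α)] [BorelSpace (ℕ → α)]

theorem unravelable_of_measurableSet {X : Set (ℕ → α)} (hX : MeasurableSet X) :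
    (full α).Unravelable (outcome ⁻¹' X) := by
  induction X, hX using MeasurableSet.induction_on_open with
  | isOpen X hX => exact unravelable_of_isOpen hX
  | compl X _ ih => exact ih.compl
  | iUnion X _ _ ih => exact Set.preimage_iUnion (f := outcome (α := α)) ▸ .iUnion ih

/-- **Borel determinacy** -/
theorem determined_of_measurableSet {X : Set (ℕ → α)} (hX : MeasurableSet X) :
    (∃ σ : Strategy (full α), ∀ x, (full α).IsBranch x → σ.Follows false x → outcome x ∈ X) ∨
      ∃ σ : Strategy (full α), ∀ x, (full α).IsBranch x → σ.Follows true x → outcome x ∉ X :=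
  have : Subsingleton ((full α).Pos 0) := inferInstanceAs (Subsingleton (Fin 0 → α))
  (unravelable_of_measurableSet hX).determined

end FullTree

section Wadge

variable {α : Type u} [Nonempty α]

/-- The play in which player `b` follows `σ` and the other player plays the sequence `a`. -/
def Strategy.play (σ : Strategy (full α)) (b : Player) (a : ℕ → α) : ∀ n, (full α).Pos n
  | 0 => Fin.elim0
  | n + 1 => if n.bodd = b then σ.move (σ.play b a n) else Fin.snoc (σ.play b a n) (a (n / 2))

variable (σ : Strategy (full α)) (b : Player) (a : ℕ → α)

theorem isBranch_play : (full α).IsBranch (σ.play b a) := by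
  intro n
  by_cases hn : n.bodd = b
  · exact (congrArg _ (if_pos hn)).trans (σ.restrict_move _)
  · exact (congrArg _ (if_neg hn)).trans (Fin.init_snoc (α := fun _ => α) ..)

theorem follows_play : σ.Follows b (σ.play b a) := fun _ _ hn => if_pos hn

variable {b} in
theorem outcome_play {n : ℕ} (hn : n.bodd ≠ b) : outcome (σ.play b a) n = a (n / 2) :=
  (congrFun (if_neg hn) _).trans (Fin.snoc_last ..)

variable [TopologicalSpace α] [DiscreteTopology α]

theorem continuous_play (n : ℕ) :
    Continuous (Y := Fin n → α) fun a => σ.play b a n := by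
  induction n with
  | zero => exact continuous_const
  | succ n ih =>
    let next (q : (Fin n → α) × α) : Fin (n + 1) → α :=
      if n.bodd = b then σ.move (T := full α) q.1 else Fin.snoc q.1 q.2
    have hnext : Continuous next := continuous_of_discreteTopology
    exact hnext.comp (ih.prodMk (continuous_apply (n / 2)))

theorem continuous_outcome_play : Continuous fun a => outcome (σ.play b a) :=
  continuous_pi fun n => (continuous_apply (Fin.last n)).comp (continuous_play σ b (n + 1))

/-- **Wadge's lemma** -/
theorem exists_continuous_eq_preimage_or [MeasurableSpace (ℕ → α)]
    [BorelSpace (ℕ → α)] {A B : Set (ℕ → α)}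
    (hA : MeasurableSet A) (hB : MeasurableSet B) :
    (∃ f : (ℕ → α) → ℕ → α, Continuous f ∧ A = f ⁻¹' B) ∨
      ∃ g : (ℕ → α) → ℕ → α, Continuous g ∧ Bᶜ = g ⁻¹' A := by
  let evens (z : ℕ → α) (i : ℕ) : α := z (2 * i)
  let odds (z : ℕ → α) (i : ℕ) : α := z (2 * i + 1)
  have hevens : Continuous evens := by fun_prop
  have hodds : Continuous odds := by fun_prop
  have hpayoff : MeasurableSet {z | ¬(evens z ∈ A ↔ odds z ∈ B)} :=
    (MeasurableSet.iff (hevens.measurable hA) (hodds.measurable hB)).compl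
  obtain ⟨σ, hσ⟩ | ⟨σ, hσ⟩ := determined_of_measurableSet hpayoff
  · refine .inr ⟨_, hevens.comp (continuous_outcome_play σ false), ?_⟩
    ext a
    have hodds_eq : odds (outcome (σ.play false a)) = a :=
      funext fun i => (outcome_play σ a (by simp)).trans (congrArg a (by lia))
    have hwin := hσ _ (isBranch_play σ false a) (follows_play σ false a)
    rw [Set.mem_ofPred_eq, hodds_eq] at hwin
    exact not_iff_comm.1 (not_iff.1 hwin)
  · refine .inl ⟨_, hodds.comp (continuous_outcome_play σ true), ?_⟩
    ext a
    have hevens_eq : evens (outcome (σ.play true a)) = a :=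
      funext fun i => (outcome_play σ a (by simp)).trans (congrArg a (by lia))
    have hwin := hσ _ (isBranch_play σ true a) (follows_play σ true a)
    rwa [Set.mem_ofPred_eq, not_not, hevens_eq] at hwin

end Wadge

end GameTree

/-! ### Sets in `Δ` and homogeneity -/

section GδRank

open Topology TopologicalSpace

variable {α β : Type*} [TopologicalSpace α] [TopologicalSpace β]

/-- `Y` consists of the points of odd rank for a rank function with finite values whose strict
superlevel sets are Gδ. In Cantor space this places `Y` and its complement in `D_ω(Σ⁰₂)`. -/
def HasGδRank (Y : Set α) : Prop :=
  ∃ c : α → ℕ, (∀ i, IsGδ {u | i < c u}) ∧ ∀ u, u ∈ Y ↔ Odd (c u)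

theorem isGδ_setOf_prodMk_mem {c d : α → ℕ} (hc : ∀ i, IsGδ {u | i < c u})
    (hd : ∀ i, IsGδ {u | i < d u}) {s : Set (ℕ × ℕ)} (hs : IsUpperSet s) :
    IsGδ {u | (c u, d u) ∈ s} := by
  have heq : {u | (c u, d u) ∈ s} = ⋂ p : ↥sᶜ, {u | p.1.1 < c u} ∪ {u | p.1.2 < d u} := by
    ext u
    simp only [mem_iInter, Subtype.forall]
    constructor
    · intro hu p hp
      by_contra! h
      simp only [mem_union, mem_ofPred_eq, not_or, not_lt] at h
      exact hp (hs h hu)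
    · intro h
      by_contra hu
      exact (h (c u, d u) hu).elim (lt_irrefl (c u)) (lt_irrefl (d u))
  rw [heq]
  exact .iInter fun p => (hc _).union (hd _)

/- The rank `2 * (c + d)`, increased by one on the combined set, stays monotone in `(c, d)`. -/
theorem HasGδRank.setOf {Y Z : Set α} (hY : HasGδRank Y) (hZ : HasGδRank Z)
    (φ : Prop → Prop → Prop) : HasGδRank {u | φ (u ∈ Y) (u ∈ Z)} := by
  classical
  obtain ⟨c, hc, hcY⟩ := hY
  obtain ⟨d, hd, hdZ⟩ := hZ
  let rank (p : ℕ × ℕ) : ℕ := 2 * (p.1 + p.2) + if φ (Odd p.1) (Odd p.2) then 1 else 0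
  have hmono : Monotone rank := by
    rintro ⟨a, b⟩ ⟨a', b'⟩ ⟨ha : a ≤ a', hb : b ≤ b'⟩
    obtain ⟨rfl, rfl⟩ | hlt : (a = a' ∧ b = b') ∨ a + b < a' + b' := by lia
    · rfl
    · simp only [rank]
      split_ifs <;> lia
  refine ⟨fun u => rank (c u, d u), fun i =>
    isGδ_setOf_prodMk_mem hc hd fun p q hpq hp => lt_of_lt_of_le hp (hmono hpq), fun u => ?_⟩
  simp only [mem_ofPred_eq, hcY, hdZ, rank]
  split_ifs with h
  · simpa only [h, true_iff] using odd_two_mul_add_one _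
  · simp [h]

theorem HasGδRank.compl {Y : Set α} (hY : HasGδRank Y) : HasGδRank Yᶜ :=
  hY.setOf hY fun p _ => ¬p

theorem HasGδRank.diff {Y Z : Set α} (hY : HasGδRank Y) (hZ : HasGδRank Z) :
    HasGδRank (Y \ Z) :=
  hY.setOf hZ fun p q => p ∧ ¬q

theorem HasGδRank.union {Y Z : Set α} (hY : HasGδRank Y) (hZ : HasGδRank Z) :
    HasGδRank (Y ∪ Z) :=
  hY.setOf hZ Or

open Classical in
theorem isGδ_setOf_lt_ite {D : Set α} {c : α → ℕ} {i : ℕ}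
    (h : IsGδ (D ∩ {u | i < c u})) : IsGδ {u | i < if u ∈ D then c u else 0} := by
  convert h using 1
  ext u
  by_cases hu : u ∈ D <;> simp [hu]

theorem hasGδRank_of_isGδ {G : Set α} (hG : IsGδ G) : HasGδRank G := by
  classical
  refine ⟨fun u => if u ∈ G then 1 else 0, fun i => isGδ_setOf_lt_ite (hG.inter ?_), fun u => ?_⟩
  · by_cases hi : i < 1 <;> simp [hi, IsGδ.univ, IsGδ.empty]
  · by_cases hu : u ∈ G <;> simp [hu]

theorem isGδ_inter_preimage {D : Set α} (hD : IsGδ D) {f : α → β} (hf : ContinuousOn f D)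
    {S : Set β} (hS : IsGδ S) : IsGδ (D ∩ f ⁻¹' S) := by
  obtain ⟨O, hO, rfl⟩ := isGδ_iff_eq_iInter_nat.1 hS
  choose U hU hUO using fun n => continuousOn_iff'.1 hf (O n) (hO n)
  have heq : D ∩ f ⁻¹' (⋂ n, O n) = D ∩ ⋂ n, U n := by
    simp only [preimage_iInter, inter_comm D, iInter_inter, hUO]
  rw [heq]
  exact hD.inter (.iInter_of_isOpen hU)

theorem HasGδRank.inter_preimage {D : Set α} (hD : IsGδ D) {f : α → β} (hf : ContinuousOn f D)
    {S : Set β} (hS : HasGδRank S) : HasGδRank (D ∩ f ⁻¹' S) := by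
  classical
  obtain ⟨c, hc, hcS⟩ := hS
  refine ⟨fun u => if u ∈ D then c (f u) else 0,
    fun i => isGδ_setOf_lt_ite (isGδ_inter_preimage hD hf (hc i)), fun u => ?_⟩
  by_cases hu : u ∈ D <;> simp [hu, hcS]

/- The rank at a point is computed from the first member of the cover containing it. -/
theorem hasGδRank_of_subset_iUnion [PerfectlyNormalSpace α] {X : Set α} {V : ℕ → Set α}
    (hV : ∀ n, IsOpen (V n)) (hXV : X ⊆ ⋃ n, V n) (hrank : ∀ n, HasGδRank (X ∩ V n)) :
    HasGδRank X := by
  classical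
  choose c hc hcX using hrank
  let P : ℕ → Set α := disjointed V
  have hP (n : ℕ) : IsGδ (P n)ᶜ := by
    simp only [P, disjointed_eq_inter_compl, compl_inter, compl_iInter, compl_compl]
    exact (hV n).isClosed_compl.isGδ.union (isOpen_biUnion fun j _ => hV j).isGδ
  let rank (u : α) : ℕ := if h : ∃ n, u ∈ P n then c h.choose u else 0
  have hrank_eq {u : α} {n : ℕ} (hu : u ∈ P n) : rank u = c n u := by
    have hex : ∃ n, u ∈ P n := ⟨n, hu⟩
    have hchoose : hex.choose = n := by
      by_contra hne
      exact disjoint_left.1 (disjoint_disjointed V hne) hex.choose_spec hu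
    rw [← hchoose]
    exact dif_pos hex
  have hrank_zero {u : α} (hu : u ∉ ⋃ n, P n) : rank u = 0 :=
    dif_neg fun h => hu (mem_iUnion.2 h)
  have hPV : ⋃ n, P n = ⋃ n, V n := iUnion_disjointed
  refine ⟨rank, fun i => ?_, fun u => ?_⟩
  · have heq : {u | i < rank u} = (⋃ n, P n) ∩ ⋂ n, ((P n)ᶜ ∪ {u | i < c n u}) := by
      ext u
      by_cases hu : u ∈ ⋃ n, P n
      · obtain ⟨n, hn⟩ := mem_iUnion.1 hu
        simp only [mem_inter_iff, hu, true_and, mem_iInter, mem_ofPred_eq]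
        refine ⟨fun h m => or_iff_not_imp_left.2 fun hm => ?_, fun h => ?_⟩
        · rw [mem_ofPred_eq, ← hrank_eq (not_not.1 hm)]
          exact h
        · rw [hrank_eq hn]
          exact (h n).resolve_left (not_not.2 hn)
      · simp [hu, hrank_zero]
    rw [heq, hPV]
    exact (isOpen_iUnion hV).isGδ.inter (.iInter fun n => (hP n).union (hc n i))
  · by_cases hu : u ∈ ⋃ n, P n
    · obtain ⟨n, hn⟩ := mem_iUnion.1 hu
      rw [hrank_eq hn, ← hcX, mem_inter_iff, and_iff_left (disjointed_subset V n hn)]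
    · rw [hrank_zero hu]
      exact iff_of_false (fun h => hu (hPV ▸ hXV h)) (by decide)

theorem hasGδRank_of_forall_exists_isOpen [PerfectlyNormalSpace α] [SecondCountableTopology α]
    {X : Set α} (h : ∀ x ∈ X, ∃ V, IsOpen V ∧ x ∈ V ∧ HasGδRank (X ∩ V)) : HasGδRank X := by
  obtain rfl | hne := X.eq_empty_or_nonempty
  · exact hasGδRank_of_isGδ .empty
  choose! V hV hxV hrank using h
  have hnhds : ∀ x ∈ X, V x ∈ 𝓝[X] x := fun x hx =>
    mem_nhdsWithin_of_mem_nhds ((hV x hx).mem_nhds (hxV x hx))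
  obtain ⟨t, htX, htc, ht⟩ := countable_cover_nhdsWithin hnhds
  have htne : t.Nonempty := by
    obtain ⟨x, hx⟩ := hne
    obtain ⟨y, hy, -⟩ := mem_iUnion₂.1 (ht hx)
    exact ⟨y, hy⟩
  obtain ⟨x, rfl⟩ := htc.exists_eq_range htne
  rw [biUnion_range] at ht
  exact hasGδRank_of_subset_iUnion (fun n => hV _ (htX (mem_range_self n))) ht
    fun n => hrank _ (htX (mem_range_self n))

theorem HasGδRank.dOmegaSigmaTwo {Y : Set Cantor} (hY : HasGδRank Y) : DOmegaSigmaTwo Y := by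
  obtain ⟨c, hc, hcY⟩ := hY
  refine ⟨fun n => {u | c u ≤ n}, fun n => ?_, fun n m hnm u hu => le_trans hu hnm, ?_⟩
  · obtain ⟨O, hO, hOc⟩ := isGδ_iff_eq_iInter_nat.1 (hc n)
    refine ⟨fun k => (O k)ᶜ, fun k => (hO k).isClosed_compl, ?_⟩
    rw [← compl_iInter, ← hOc]
    ext u
    exact (not_lt (a := n)).symm
  · ext u
    have hexact (n : ℕ) : u ∈ {u | c u ≤ n} \ ⋃ m < n, {u | c u ≤ m} ↔ c u = n := by
      simp only [mem_sdiff, mem_iUnion, mem_ofPred_eq, not_exists, not_le]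
      exact ⟨fun ⟨hle, hlt⟩ => hle.antisymm (not_lt.1 fun h => (hlt _ h).false),
        fun h => ⟨h.le, fun m hm => hm.trans_eq h.symm⟩⟩
    simp only [mem_iUnion, exists_prop, hexact, hcY, exists_eq_right', mem_ofPred_eq]

theorem HasGδRank.inDelta {Y : Set Cantor} (hY : HasGδRank Y) : InDelta Y :=
  ⟨hY.dOmegaSigmaTwo, hY.compl.dOmegaSigmaTwo⟩

end GδRank

section LocalReduction

open Filter Topology TopologicalSpace

variable {α β γ : Type*} [TopologicalSpace α] [TopologicalSpace β] [TopologicalSpace γ]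

/-- On the Gδ set `D`, the map `f` is continuous and reduces `X` to `Y`. -/
structure IsReductionOn (f : α → β) (D X : Set α) (Y : Set β) : Prop where
  isGδ : IsGδ D
  continuousOn : ContinuousOn f D
  mem_iff : ∀ u ∈ D, u ∈ X ↔ f u ∈ Y

namespace IsReductionOn

variable {f : α → β} {D X : Set α} {Y : Set β}

theorem mono (hf : IsReductionOn f D X Y) {D' : Set α} (hD' : IsGδ D') (hsub : D' ⊆ D) :
    IsReductionOn f D' X Y where
  isGδ := hD'
  continuousOn := hf.continuousOn.mono hsub
  mem_iff u hu := hf.mem_iff u (hsub hu)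

theorem comp {g : β → γ} {E : Set β} {Z : Set γ} (hg : IsReductionOn g E Y Z)
    (hf : IsReductionOn f D X Y) : IsReductionOn (g ∘ f) (D ∩ f ⁻¹' E) X Z where
  isGδ := isGδ_inter_preimage hf.isGδ hf.continuousOn hg.isGδ
  continuousOn := hg.continuousOn.comp (hf.continuousOn.mono inter_subset_left) fun _ hu => hu.2
  mem_iff u hu := (hf.mem_iff u hu.1).trans (hg.mem_iff _ hu.2)

theorem compl (hf : IsReductionOn f D X Y) : IsReductionOn f D Xᶜ Yᶜ where
  isGδ := hf.isGδ
  continuousOn := hf.continuousOn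
  mem_iff u hu := not_congr (hf.mem_iff u hu)

theorem hasGδRank_inter_diff (hf : IsReductionOn f D X Y) {W G : Set β} (hmaps : MapsTo f D W)
    (hrank : HasGδRank (Y ∩ (W \ G))) : HasGδRank (X ∩ (D \ f ⁻¹' G)) := by
  convert hrank.inter_preimage hf.isGδ hf.continuousOn using 1
  ext u
  exact ⟨fun ⟨hu, huD, huG⟩ => ⟨huD, (hf.mem_iff u huD).1 hu, hmaps huD, huG⟩,
    fun ⟨huD, hu, _, huG⟩ => ⟨(hf.mem_iff u huD).2 hu, huD, huG⟩⟩

end IsReductionOn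

/-- On the open set `V`, the map `f` reduces `X` to `Y` up to points outside `X`: the domain `D`
of the reduction contains `X ∩ V`. -/
structure IsLocalReduction (f : α → β) (D V X : Set α) (Y : Set β) : Prop
    extends IsReductionOn f D X Y where
  isOpen : IsOpen V
  subset : D ⊆ V
  inter_subset : X ∩ V ⊆ D

theorem isOpen_setOf_eventually_prod_nhdsWithin (A : Set α) (P : α × α → Prop) :
    IsOpen {u | ∀ᶠ p in 𝓝[A] u ×ˢ 𝓝[A] u, P p} := by
  refine isOpen_iff_eventually.2 fun u hu => ?_
  obtain ⟨t, ht, htP⟩ := mem_prod_same_iff.1 hu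
  filter_upwards [eventually_nhds_nhdsWithin.2 ht] with v hv
  exact mem_prod_same_iff.2 ⟨t, hv, htP⟩

theorem isGδ_setOf_exists_tendsto_nhdsWithin [IsCompletelyMetrizableSpace β] {A : Set α}
    (hA : Dense A) (f : α → β) : IsGδ {u | ∃ y, Tendsto f (𝓝[A] u) (𝓝 y)} := by
  let := upgradeIsCompletelyMetrizable β
  have heq : {u | ∃ y, Tendsto f (𝓝[A] u) (𝓝 y)} = ⋂ n : ℕ,
      {u | ∀ᶠ p in 𝓝[A] u ×ˢ 𝓝[A] u, dist (f p.1) (f p.2) < 1 / (n + 1)} := by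
    ext u
    have : (𝓝[A] u).NeBot := mem_closure_iff_nhdsWithin_neBot.1 (hA u)
    rw [mem_ofPred_eq, ← cauchy_map_iff_exists_tendsto, cauchy_map_iff',
      Metric.uniformity_basis_dist_inv_nat_succ.tendsto_right_iff]
    simp only [mem_iInter, true_imp_iff, mem_ofPred_eq]
  rw [heq]
  exact .iInter_of_isOpen fun n => isOpen_setOf_eventually_prod_nhdsWithin A _

theorem exists_continuousOn_extension [IsCompletelyMetrizableSpace β] {A : Set α}
    (hA : Dense A) {j : A → β} (hj : Continuous j) :
    ∃ (f : α → β) (D : Set α), IsGδ D ∧ A ⊆ D ∧ ContinuousOn f D ∧ ∀ x : A, f x = j x := by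
  let f₀ : α → β := Function.extend (↑) j fun u => j (hA.nonempty_iff.2 ⟨u⟩).to_subtype.some
  have hf₀ (x : A) : f₀ x = j x := Subtype.val_injective.extend_apply j _ x
  have hcont : ContinuousOn f₀ A := by
    rw [continuousOn_iff_continuous_domRestrict]
    exact hj.congr fun x => (hf₀ x).symm
  refine ⟨extendFrom A f₀, _, isGδ_setOf_exists_tendsto_nhdsWithin hA f₀,
    fun x hx => ⟨f₀ x, hcont x hx⟩, continuousOn_extendFrom (fun x _ => hA x) fun x hx => hx,
    fun x => (extendFrom_extends hcont x x.2).trans (hf₀ x)⟩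

/-- **Lavrentiev's theorem** for the autohomeomorphisms of a dense subspace. -/
theorem exists_isReductionOn_of_homeomorph [IsCompletelyMetrizableSpace α] {X : Set α}
    (hX : Dense X) (h : X ≃ₜ X) :
    ∃ (φ : α → α) (D : Set α), X ⊆ D ∧ (∀ x : X, φ x = h x) ∧ IsReductionOn φ D X X := by
  obtain ⟨φ, D₁, hD₁, hXD₁, hφ, hφX⟩ :=
    exists_continuousOn_extension hX (continuous_subtype_val.comp h.continuous)
  obtain ⟨ψ, D₂, hD₂, hXD₂, hψ, hψX⟩ :=
    exists_continuousOn_extension hX (continuous_subtype_val.comp h.symm.continuous)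
  let D₀ : Set α := D₁ ∩ φ ⁻¹' D₂
  have hD₀ : IsGδ D₀ := isGδ_inter_preimage hD₁ hφ hD₂
  have hψφ : ContinuousOn (fun u => (ψ (φ u), u)) D₀ :=
    (hψ.comp (hφ.mono inter_subset_left) fun _ hu => hu.2).prodMk continuousOn_id
  have hD := isGδ_inter_preimage hD₀ hψφ isClosed_diagonal.isGδ
  have hmaps (x : X) : φ x ∈ X := hφX x ▸ (h x).2
  refine ⟨φ, D₀ ∩ {u | (ψ (φ u), u) ∈ diagonal α}, fun x hx =>
    ⟨⟨hXD₁ hx, hXD₂ (hmaps ⟨x, hx⟩)⟩, ?_⟩, hφX, hD, hφ.mono fun _ hu => hu.1.1, fun u hu =>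
    ⟨fun hx => hmaps ⟨u, hx⟩, fun hx => ?_⟩⟩
  · change ψ (φ x) = x
    rw [hφX ⟨x, hx⟩]
    exact (hψX (h ⟨x, hx⟩)).trans (congrArg _ (h.symm_apply_apply _))
  · have hu' : ψ (φ u) = u := hu.2
    rw [← hu', hψX ⟨φ u, hx⟩]
    exact (h.symm ⟨φ u, hx⟩).2

variable [IsCompletelyMetrizableSpace α] {X : Set α}

theorem exists_isLocalReduction_mapsTo (hX : Dense X) (hhom : IsHomogeneous X) {x : α}
    (hx : x ∈ X) {W : Set α} (hW : IsOpen W) (hWne : W.Nonempty) :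
    ∃ (φ : α → α) (D V : Set α), x ∈ V ∧ MapsTo φ D W ∧ IsLocalReduction φ D V X X := by
  obtain ⟨y, hyW, hy⟩ := hX.inter_open_nonempty W hW hWne
  obtain ⟨h, hxy⟩ := hhom ⟨x, hx⟩ ⟨y, hy⟩
  obtain ⟨φ, D, hXD, hφh, hφ⟩ := exists_isReductionOn_of_homeomorph hX h
  obtain ⟨V, hV, hVD⟩ := continuousOn_iff'.1 hφ.continuousOn W hW
  have hφx : φ x ∈ W := by rwa [hφh ⟨x, hx⟩, hxy]
  refine ⟨φ, D ∩ V, V, ?_, ?_, hφ.mono (hφ.isGδ.inter hV.isGδ) inter_subset_left, hV,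
    inter_subset_right, fun u hu => ⟨hXD hu.1, hu.2⟩⟩
  · exact (hVD.subset ⟨hφx, hXD hx⟩).1
  · exact fun u hu => (hVD.symm.subset hu.symm).1

theorem not_hasGδRank_inter_isOpen [SecondCountableTopology α] (hX : Dense X)
    (hhom : IsHomogeneous X) (hrank : ¬HasGδRank X) {W : Set α} (hW : IsOpen W)
    (hWne : W.Nonempty) : ¬HasGδRank (X ∩ W) := by
  refine fun hXW => hrank (hasGδRank_of_forall_exists_isOpen fun x hx => ?_)
  obtain ⟨φ, D, V, hxV, hmaps, hφ⟩ := exists_isLocalReduction_mapsTo hX hhom hx hW hWne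
  refine ⟨V, hφ.isOpen, hxV, ?_⟩
  convert hXW.inter_preimage hφ.isGδ hφ.continuousOn using 1
  ext u
  exact ⟨fun hu => ⟨hφ.inter_subset hu, (hφ.mem_iff u (hφ.inter_subset hu)).1 hu.1,
      hmaps (hφ.inter_subset hu)⟩,
    fun hu => ⟨(hφ.mem_iff u hu.1).2 hu.2.1, hφ.subset hu.1⟩⟩

/- A homeomorphism of `X` carries a small open set into `W`. For the reduction to `Xᶜ`, a
homeomorphism is applied after `f`, which takes a value in `X` because `X ∩ U` is not a Gδ set. -/
theorem exists_reductions_mapsTo [SecondCountableTopology α] (hX : Dense X)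
    (hhom : IsHomogeneous X) (hrank : ¬HasGδRank X) {f : α → α} {D U : Set α}
    (hf : IsLocalReduction f D U X Xᶜ) (hU : U.Nonempty) {W : Set α} (hW : IsOpen W)
    (hWne : W.Nonempty) :
    ∃ (V E : Set α) (t t' : α → α), IsOpen V ∧ V.Nonempty ∧ E ⊆ V ∧ HasGδRank (X ∩ (V \ E)) ∧
      MapsTo t E W ∧ MapsTo t' E W ∧ IsReductionOn t E X X ∧ IsReductionOn t' E X Xᶜ := by
  obtain ⟨p, hpD, hpX⟩ : ∃ p ∈ D, p ∉ X := by
    by_contra! hDX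
    refine not_hasGδRank_inter_isOpen hX hhom hrank hf.isOpen hU ?_
    rw [hf.inter_subset.antisymm fun u hu => ⟨hDX u hu, hf.subset hu⟩]
    exact hasGδRank_of_isGδ hf.isGδ
  have hfp : f p ∈ X := not_not.1 (mt (hf.mem_iff p hpD).2 hpX)
  obtain ⟨φ', D', V', hpV', hmaps', hφ'⟩ :=
    exists_isLocalReduction_mapsTo hX hhom hfp hW hWne
  obtain ⟨O, hO, hOD⟩ := continuousOn_iff'.1 hf.continuousOn V' hφ'.isOpen
  have hmemO {u : α} (hu : u ∈ D) : f u ∈ V' ↔ u ∈ O := by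
    simpa [hu] using congrArg (u ∈ ·) hOD
  obtain ⟨x, ⟨hxO, hxU⟩, hxX⟩ := hX.inter_open_nonempty (O ∩ U) (hO.inter hf.isOpen)
    ⟨p, (hmemO hpD).1 hpV', hf.subset hpD⟩
  obtain ⟨φ, D₀, V₀, hxV₀, hmaps, hφ⟩ := exists_isLocalReduction_mapsTo hX hhom hxX hW hWne
  have hφ'f := hφ'.compl.comp hf.toIsReductionOn
  let V : Set α := V₀ ∩ (O ∩ U)
  let E : Set α := V ∩ (D₀ ∩ (D ∩ f ⁻¹' D'))
  have hV : IsOpen V := hφ.isOpen.inter (hO.inter hf.isOpen)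
  have hE : IsGδ E := hV.isGδ.inter (hφ.isGδ.inter hφ'f.isGδ)
  refine ⟨V, E, φ, φ' ∘ f, hV, ⟨x, hxV₀, hxO, hxU⟩, inter_subset_left, ?_, fun u hu => hmaps hu.2.1,
    fun u hu => hmaps' hu.2.2.2, hφ.mono hE fun u hu => hu.2.1, hφ'f.mono hE fun u hu => hu.2.2⟩
  have hdiff : X ∩ (V \ E) = (V ∩ D) \ (D ∩ f ⁻¹' D') := by
    ext u
    refine ⟨fun ⟨hu, huV, huE⟩ => ⟨⟨huV, hf.inter_subset ⟨hu, huV.2.2⟩⟩, fun huD' =>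
      huE ⟨huV, hφ.inter_subset ⟨hu, huV.1⟩, huD'⟩⟩, fun ⟨⟨huV, huD⟩, huD'⟩ =>
      ⟨(hf.mem_iff u huD).2 fun hfu => huD' ⟨huD, ?_⟩, huV, fun huE => huD' huE.2.2⟩⟩
    exact hφ'.inter_subset ⟨hfu, (hmemO huD).2 huV.2.1⟩
  rw [hdiff]
  exact (hasGδRank_of_isGδ (hV.isGδ.inter hf.isGδ)).diff (hasGδRank_of_isGδ hφ'f.isGδ)

end LocalReduction

/-! ### The semiideal generated by branches -/

section BranchSemiideal

open Filter Topology

/-- An enumeration of the finite binary words. -/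
noncomputable def word : ℕ ≃ List Bool :=
  have := Denumerable.ofEncodableOfInfinite (List Bool)
  (Denumerable.eqv (List Bool)).symm

theorem tendsto_length_word : Tendsto (fun n => (word n).length) atTop atTop := by
  refine tendsto_atTop.2 fun k => ?_
  rw [← Nat.cofinite_eq_atTop, eventually_cofinite]
  simp only [not_le]
  exact (List.finite_length_lt Bool k).preimage word.injective.injOn

/-- The branch of `x` in the binary tree: the set of codes of the initial segments of `x`. -/
noncomputable def branch (x : Cantor) : Cantor :=
  fun n => decide (PiNat.res x (word n).length = word n)

theorem branch_eq_true {x : Cantor} {n : ℕ} :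
    branch x n = true ↔ PiNat.res x (word n).length = word n :=
  decide_eq_true_iff

theorem isLocallyConstant_res {α : Type*} [TopologicalSpace α] [DiscreteTopology α] (k : ℕ) :
    IsLocallyConstant fun x : ℕ → α => PiNat.res x k := by
  refine (IsLocallyConstant.iff_exists_open _).2 fun x =>
    ⟨PiNat.cylinder x k, PiNat.isOpen_cylinder _ x k, PiNat.self_mem_cylinder x k, fun y hy => ?_⟩
  rwa [PiNat.cylinder_eq_res] at hy

theorem continuous_branch : Continuous branch :=
  continuous_pi fun n =>
    ((isLocallyConstant_res _).comp fun s => decide (s = word n)).continuous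

/-- The code of the initial segment of `x` of length `k`. -/
noncomputable def prefixCode (x : Cantor) (k : ℕ) : ℕ :=
  word.symm (PiNat.res x k)

theorem branch_prefixCode_iff {x y : Cantor} {k : ℕ} :
    branch y (prefixCode x k) = true ↔ ∀ ⦃i⦄, i < k → y i = x i := by
  rw [branch_eq_true, prefixCode, Equiv.apply_symm_apply, PiNat.res_length, PiNat.res_eq_res]

theorem tendsto_prefixCode (x : Cantor) : Tendsto (prefixCode x) atTop atTop := by
  refine (word.symm.injective.comp fun k l h => ?_).nat_tendsto_atTop
  simpa only [PiNat.res_length] using congrArg List.length h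

theorem frequently_branch (x : Cantor) : ∃ᶠ n in atTop, branch x n = true :=
  (tendsto_prefixCode x).frequently
    (Eventually.of_forall fun _ => branch_prefixCode_iff.2 fun _ _ => rfl).frequently

theorem eq_of_le_branch {x y A : Cantor} (hA : ∃ᶠ n in atTop, A n = true)
    (hx : A ≤ᶠ[atTop] branch x) (hy : A ≤ᶠ[atTop] branch y) : x = y := by
  funext i
  obtain ⟨n, hn, hxn, hyn, hi⟩ :=
    (hA.and_eventually
      (hx.and (hy.and (tendsto_length_word.eventually_gt_atTop i)))).exists
  exact PiNat.res_eq_res.1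
    ((branch_eq_true.1 (hxn hn)).trans (branch_eq_true.1 (hyn hn)).symm) hi

theorem exists_incompatible_codes (N : ℕ) :
    ∃ n ≥ N, ∃ m ≥ N, ∀ x, ¬(branch x n = true ∧ branch x m = true) := by
  obtain ⟨k, ⟨hn, hm⟩, hk⟩ :=
    ((((tendsto_prefixCode fun _ => true).eventually_ge_atTop N).and
      ((tendsto_prefixCode fun _ => false).eventually_ge_atTop N)).and
      (eventually_gt_atTop 0)).exists
  refine ⟨_, hn, _, hm, fun x ⟨htrue, hfalse⟩ => ?_⟩
  exact Bool.noConfusion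
    ((branch_prefixCode_iff.1 htrue hk).symm.trans (branch_prefixCode_iff.1 hfalse hk))

/-- The semiideal generated by the branches of the points of `X`. -/
def branchSemiideal (X : Set Cantor) : Set Cantor :=
  {A | ∃ x ∈ X, A ≤ᶠ[atTop] branch x}

variable {X : Set Cantor}

theorem branch_mem_branchSemiideal_iff {x : Cantor} : branch x ∈ branchSemiideal X ↔ x ∈ X := by
  refine ⟨fun ⟨y, hy, hxy⟩ => ?_, fun hx => ⟨x, hx, EventuallyLE.rfl⟩⟩
  rwa [eq_of_le_branch (frequently_branch x) EventuallyLE.rfl hxy]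

theorem wadgeLe_branchSemiideal (X : Set Cantor) : WadgeLe X (branchSemiideal X) :=
  ⟨branch, continuous_branch, Set.ext fun _ => branch_mem_branchSemiideal_iff.symm⟩

theorem closedUnderFinMod_branchSemiideal (X : Set Cantor) :
    ClosedUnderFinMod (branchSemiideal X) := by
  rintro A ⟨x, hx, hA⟩ B hAB
  refine ⟨x, hx, EventuallyLE.trans ?_ hA⟩
  rw [← Nat.cofinite_eq_atTop]
  exact EventuallyEq.le (eventually_cofinite.2 (by simpa only [ne_comm] using hAB))

theorem isSemiideal_branchSemiideal (hX : X.Nonempty) : IsSemiideal (branchSemiideal X) := by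
  refine ⟨?_, ?_, ?_, closedUnderFinMod_branchSemiideal X⟩
  · obtain ⟨x, hx⟩ := hX
    exact ⟨x, hx, Eventually.of_forall fun _ => Bool.false_le _⟩
  · rintro ⟨x, -, hA⟩
    obtain ⟨N, hN⟩ := eventually_atTop.1 hA
    obtain ⟨n, hn, m, hm, hnm⟩ := exists_incompatible_codes N
    exact hnm x ⟨hN n hn rfl, hN m hm rfl⟩
  · rintro A ⟨x, hx, hA⟩ B hBA
    exact ⟨x, hx, EventuallyLE.trans (Eventually.of_forall hBA) hA⟩

/-- The pairs `(x, A)` such that `A` is contained in the branch of `x` from `N` on. -/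
def belowBranchFrom (N : ℕ) : Set (Cantor × Cantor) :=
  {p | ∀ n ≥ N, p.2 n ≤ branch p.1 n}

theorem isClosed_belowBranchFrom (N : ℕ) : IsClosed (belowBranchFrom N) := by
  simp only [belowBranchFrom, Set.ofPred_forall]
  refine isClosed_iInter fun n => isClosed_iInter fun _ => ?_
  have hcont : Continuous fun p : Cantor × Cantor => (p.2 n, branch p.1 n) := by
    have := continuous_branch
    fun_prop
  exact (isClosed_discrete {q : Bool × Bool | q.1 ≤ q.2}).preimage hcont

theorem isClosed_image_belowBranchFrom (N : ℕ) : IsClosed (Prod.snd '' belowBranchFrom N) :=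
  isClosedMap_snd_of_compactSpace _ (isClosed_belowBranchFrom N)

theorem eventually_le_branch {N : ℕ} {p : Cantor × Cantor} (hp : p ∈ belowBranchFrom N) :
    p.2 ≤ᶠ[atTop] branch p.1 :=
  eventually_atTop.2 ⟨N, hp⟩

theorem branchSemiideal_subset : branchSemiideal X ⊆ ⋃ N, Prod.snd '' belowBranchFrom N := by
  rintro A ⟨x, -, hA⟩
  obtain ⟨N, hN⟩ := eventually_atTop.1 hA
  exact mem_iUnion.2 ⟨N, (x, A), hN, rfl⟩

/- Adding two late incompatible codes to `A` is a small finite modification that leaves no branch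
containing the result from `N` on. -/
theorem exists_tendsto_notMem_image_belowBranchFrom {R : Set Cantor} (hR : ClosedUnderFinMod R)
    {A : Cantor} (hA : A ∈ R) (N : ℕ) :
    ∃ B : ℕ → Cantor, (∀ k, B k ∈ R) ∧ (∀ k, B k ∉ Prod.snd '' belowBranchFrom N) ∧
      Tendsto B atTop (𝓝 A) := by
  choose n hn m hm hnm using exists_incompatible_codes
  let B (k i : ℕ) : Bool := if i = n (max k N) ∨ i = m (max k N) then true else A i
  refine ⟨B, fun k => hR A hA _ ?_, ?_, ?_⟩
  · refine (Set.toFinite {n (max k N), m (max k N)}).subset fun i hi => ?_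
    by_contra h
    exact hi (if_neg h).symm
  · rintro k ⟨⟨x, -⟩, hx, rfl⟩
    exact hnm _ x ⟨hx _ ((le_max_right _ _).trans (hn _)) (if_pos (.inl rfl)),
      hx _ ((le_max_right _ _).trans (hm _)) (if_pos (.inr rfl))⟩
  · refine tendsto_pi_nhds.2 fun i => tendsto_const_nhds.congr' ?_
    filter_upwards [eventually_gt_atTop i] with k hk
    have := hn (max k N)
    have := hm (max k N)
    exact (if_neg (by lia)).symm

theorem firstCategory_branchSemiideal (X : Set Cantor) : FirstCategory (branchSemiideal X) := by
  let F (N : ℕ) : Set (branchSemiideal X) := (↑) ⁻¹' (Prod.snd '' belowBranchFrom N)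
  refine ⟨F, fun N => ?_, ?_⟩
  · have hclosed : IsClosed (F N) :=
      (isClosed_image_belowBranchFrom N).preimage continuous_subtype_val
    rw [hclosed.closure_eq, interior_eq_empty_iff_dense_compl]
    rintro ⟨A, hA⟩
    obtain ⟨B, hBR, hBN, hB⟩ := exists_tendsto_notMem_image_belowBranchFrom
      (closedUnderFinMod_branchSemiideal X) hA N
    have hlim : Tendsto (fun k => (⟨B k, hBR k⟩ : branchSemiideal X)) atTop (𝓝 ⟨A, hA⟩) :=
      tendsto_subtype_rng.2 hB
    exact mem_closure_of_tendsto hlim (Eventually.of_forall hBN)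
  · refine (Set.eq_univ_of_forall ?_).symm
    rintro ⟨A, hA⟩
    obtain ⟨N, hN⟩ := mem_iUnion.1 (branchSemiideal_subset hA)
    exact mem_iUnion.2 ⟨N, hN⟩

theorem isGδ_frequently_eq_true : IsGδ {A : Cantor | ∃ᶠ n in atTop, A n = true} := by
  simp only [frequently_atTop, Set.ofPred_forall]
  refine IsGδ.iInter_of_isOpen fun N => ?_
  simp only [Set.ofPred_exists, Set.ofPred_and]
  refine isOpen_iUnion fun n => isOpen_const.inter ?_
  have happly : Continuous fun A : Cantor => A n := continuous_apply n
  exact (isOpen_discrete {true}).preimage happly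

theorem mem_branchSemiideal_of_not_frequently (hX : X.Nonempty) {A : Cantor}
    (hA : ¬∃ᶠ n in atTop, A n = true) : A ∈ branchSemiideal X := by
  obtain ⟨x, hx⟩ := hX
  exact ⟨x, hx, (not_frequently.1 hA).mono fun _ hn h => absurd h hn⟩

/- An infinite member of the semiideal is almost contained in exactly one branch, so these members
form an injective projection of a Borel set and the Lusin–Souslin theorem applies. -/
theorem measurableSet_branchSemiideal (hX : X.Nonempty) (hXmeas : MeasurableSet X) :
    MeasurableSet (branchSemiideal X) := by
  let Inf : Set Cantor := {A | ∃ᶠ n in atTop, A n = true}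
  let P : Set (Cantor × Cantor) := {p | p.1 ∈ X ∧ p.2 ∈ Inf ∧ p ∈ ⋃ N, belowBranchFrom N}
  have hInf : MeasurableSet Inf := isGδ_frequently_eq_true.measurableSet
  have hP : MeasurableSet P := (measurable_fst hXmeas).inter ((measurable_snd hInf).inter
    (MeasurableSet.iUnion fun N => (isClosed_belowBranchFrom N).measurableSet))
  have hle {p : Cantor × Cantor} (hp : p ∈ P) : p.2 ≤ᶠ[atTop] branch p.1 :=
    eventually_le_branch (mem_iUnion.1 hp.2.2).choose_spec
  have hinj : InjOn Prod.snd P := by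
    rintro ⟨x, A⟩ hx ⟨y, B⟩ hy (rfl : A = B)
    exact congrArg (·, A) (eq_of_le_branch hx.2.1 (hle hx) (hle hy))
  have himage : branchSemiideal X = Infᶜ ∪ Prod.snd '' P := by
    ext A
    refine ⟨fun hA => or_iff_not_imp_left.2 fun hAinf => ?_, ?_⟩
    · obtain ⟨x, hx, hxA⟩ := hA
      obtain ⟨N, hN⟩ := eventually_atTop.1 hxA
      exact ⟨(x, A), ⟨hx, not_not.1 hAinf, mem_iUnion.2 ⟨N, hN⟩⟩, rfl⟩
    · rintro (hA | ⟨⟨x, A⟩, hp, rfl⟩)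
      · exact mem_branchSemiideal_of_not_frequently hX hA
      · exact ⟨x, hp.1, hle hp⟩
  rw [himage]
  exact hInf.compl.union (hP.image_of_measurable_injOn measurable_snd hinj)

end BranchSemiideal

section SelfDualReduction

open Filter Topology

theorem isMeagre_of_firstCategory {α : Type*} [TopologicalSpace α] {X : Set α}
    (hX : FirstCategory X) : IsMeagre X := by
  obtain ⟨F, hF, huniv⟩ := hX
  have hXF : X = ⋃ n, (↑) '' F n := by rw [← image_iUnion, ← huniv, image_univ, Subtype.range_val]
  rw [hXF]
  exact isMeagre_iUnion fun n => (IsNowhereDense.image_val (hF n)).isMeagre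

theorem continuousOn_of_isClosed_graph {α β : Type*} [TopologicalSpace α] [TopologicalSpace β]
    [CompactSpace β] {f : α → β} {G : Set α} {C : Set (α × β)} (hC : IsClosed C)
    (hf : ∀ u ∈ G, ∀ y, (u, y) ∈ C ↔ f u = y) : ContinuousOn f G := by
  refine continuousOn_iff_isClosed.2 fun t ht => ⟨Prod.fst '' (C ∩ Prod.snd ⁻¹' t),
    isClosedMap_fst_of_compactSpace _ (hC.inter (ht.preimage continuous_snd)), ?_⟩
  ext u
  refine and_congr_left fun hu => ⟨fun hfu => ⟨(u, f u), ⟨(hf u hu _).2 rfl, hfu⟩, rfl⟩, ?_⟩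
  rintro ⟨⟨v, y⟩, ⟨hvy, hy⟩, rfl⟩
  rwa [← (hf v hu y).1 hvy] at hy

/- Cantor space is not meagre, while `X` is and the sets `Prod.snd '' belowBranchFrom N` are closed
and cover the semiideal. -/
theorem exists_nonempty_interior_preimage {X : Set Cantor} (hfc : FirstCategory X)
    {g : Cantor → Cantor} (hg : Continuous g) (hgX : Xᶜ = g ⁻¹' branchSemiideal X) :
    ∃ N, (interior (g ⁻¹' (Prod.snd '' belowBranchFrom N))).Nonempty := by
  by_contra! hempty
  have hcover : univ = X ∪ ⋃ N, g ⁻¹' (Prod.snd '' belowBranchFrom N) := by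
    rw [← preimage_iUnion, eq_comm, ← compl_subset_iff_union, hgX]
    exact preimage_mono branchSemiideal_subset
  refine not_isMeagre_of_isOpen isOpen_univ univ_nonempty (s := (univ : Set Cantor)) ?_
  rw [hcover]
  exact (isMeagre_of_firstCategory hfc).union (isMeagre_iUnion fun N =>
    (((isClosed_image_belowBranchFrom N).preimage hg).isNowhereDense_iff.2 (hempty N)).isMeagre)

theorem exists_isLocalReduction_compl {X : Set Cantor} (hX : X.Nonempty)
    (hfc : FirstCategory X) {g : Cantor → Cantor} (hg : Continuous g)
    (hgX : Xᶜ = g ⁻¹' branchSemiideal X) :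
    ∃ (f : Cantor → Cantor) (D U : Set Cantor), U.Nonempty ∧ IsLocalReduction f D U X Xᶜ := by
  obtain ⟨N, hN⟩ := exists_nonempty_interior_preimage hfc hg hgX
  let U : Set Cantor := interior (g ⁻¹' (Prod.snd '' belowBranchFrom N))
  let D : Set Cantor := U ∩ g ⁻¹' {A | ∃ᶠ n in atTop, A n = true}
  have hD : IsGδ D := isGδ_inter_preimage isOpen_interior.isGδ hg.continuousOn
    isGδ_frequently_eq_true
  have hbranch : ∀ u ∈ D, ∃ x, (x, g u) ∈ belowBranchFrom N := fun u hu => by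
    obtain ⟨⟨x, A⟩, hx, hA⟩ := interior_subset hu.1
    exact ⟨x, hA ▸ hx⟩
  choose! f hf using hbranch
  have hunique {u : Cantor} (hu : u ∈ D) {x : Cantor} (hx : g u ≤ᶠ[atTop] branch x) : f u = x :=
    eq_of_le_branch hu.2 (eventually_le_branch (hf u hu)) hx
  have hcont : ContinuousOn f D := by
    have hswap : Continuous fun p : Cantor × Cantor => (p.2, g p.1) := by fun_prop
    refine continuousOn_of_isClosed_graph ((isClosed_belowBranchFrom N).preimage hswap)
      fun u hu x => ⟨fun hx => hunique hu (eventually_le_branch hx), ?_⟩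
    rintro rfl
    exact hf u hu
  have hgR (u : Cantor) : u ∉ X ↔ g u ∈ branchSemiideal X := Set.ext_iff.1 hgX u
  have hfX {u : Cantor} (hu : u ∈ D) : u ∉ X ↔ f u ∈ X := by
    refine (hgR u).trans ⟨fun ⟨x, hx, hux⟩ => ?_, fun hfu =>
      ⟨f u, hfu, eventually_le_branch (hf u hu)⟩⟩
    rwa [hunique hu hux]
  refine ⟨f, D, U, hN, ⟨hD, hcont, fun u hu => (not_iff_comm.1 (hfX hu)).symm⟩, isOpen_interior,
    inter_subset_left, fun u ⟨hu, huU⟩ => ⟨huU, ?_⟩⟩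
  by_contra hinf
  exact (hgR u).2 (mem_branchSemiideal_of_not_frequently hX hinf) hu

end SelfDualReduction

/-! ### The Martin–Monk argument -/

section FlipSet

open Filter Topology

/-- The homeomorphism of Cantor space changing the coordinate `m`. -/
def flipAt (m : ℕ) : Cantor ≃ₜ Cantor :=
  Homeomorph.piCongrRight fun i => if i = m then Homeomorph.ofDiscrete Equiv.boolNot else .refl _

theorem flipAt_self (m : ℕ) (z : Cantor) : flipAt m z m = !z m := by
  simp [flipAt, Homeomorph.ofDiscrete]

theorem flipAt_of_ne {m i : ℕ} (h : i ≠ m) (z : Cantor) : flipAt m z i = z i := by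
  simp [flipAt, h]

theorem tendsto_flipAt (z : Cantor) : Tendsto (fun m => flipAt m z) atTop (𝓝 z) := by
  refine tendsto_pi_nhds.2 fun i => tendsto_const_nhds.congr' ?_
  filter_upwards [eventually_gt_atTop i] with m hm
  exact (flipAt_of_ne hm.ne z).symm

/- A generic point lies in the open set equal to `S` modulo a meagre set if and only if almost all
of its flips do. -/
theorem not_forall_flipAt_mem_iff_notMem {S : Set Cantor} (hS : MeasurableSet S) :
    ¬∀ m z, flipAt m z ∈ S ↔ z ∉ S := by
  intro hflip
  obtain ⟨u, hu, hSu⟩ := hS.residualEq_isOpen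
  have hSu' : ∀ᶠ z in residual Cantor, z ∈ S ↔ z ∈ u := eventuallyEq_set.1 hSu
  have hgeneric : ∀ᶠ z in residual Cantor,
      (z ∈ S ↔ z ∈ u) ∧ ∀ m, flipAt m z ∈ S ↔ flipAt m z ∈ u := by
    refine hSu'.and (eventually_countable_forall.2 fun m => ?_)
    rw [← (flipAt m).residual_map_eq] at hSu'
    exact hSu'
  have hdense := dense_of_mem_residual hgeneric
  obtain rfl | hne := u.eq_empty_or_nonempty
  · obtain ⟨z, hz, hzflip⟩ := hdense.nonempty
    exact (hzflip 0).1 ((hflip 0 z).2 hz.1)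
  · obtain ⟨z, hzu, hz, hzflip⟩ := hdense.inter_open_nonempty u hu hne
    obtain ⟨m, hm⟩ := ((tendsto_flipAt z).eventually (hu.mem_nhds hzu)).exists
    exact (hflip m z).1 ((hzflip m).2 hm) (hz.2 hzu)

end FlipSet

section InverseSystem

open Filter Topology

variable {ι : Type*} {E : ℕ → Type*} (t : ∀ n, ι → E (n + 1) → E n)

/-- The image in `E n` of the point `p (n + d)` under the composition of the bonding maps
`t k (z k)`, `n ≤ k < n + d`. -/
def compBonding (z : ℕ → ι) (p : ∀ n, E n) : ℕ → ∀ n, E n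
  | 0, n => p n
  | d + 1, n => t n (z n) (compBonding z p d (n + 1))

variable {t}

theorem compBonding_succ (z : ℕ → ι) (p : ∀ n, E n) (d n : ℕ) :
    compBonding t z p (d + 1) n = compBonding t z (fun k => t k (z k) (p (k + 1))) d n := by
  induction d generalizing n with
  | zero => rfl
  | succ d ih => exact congrArg (t n (z n)) (ih (n + 1))

theorem compBonding_congr {z z' : ℕ → ι} {n : ℕ} (h : ∀ k ≥ n, z k = z' k) (p : ∀ n, E n)
    (d : ℕ) : compBonding t z p d n = compBonding t z' p d n := by
  induction d generalizing n with
  | zero => rfl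
  | succ d ih =>
    rw [compBonding, compBonding, h n le_rfl, ih fun k hk => h k (Nat.le_of_succ_le hk)]

variable [∀ n, MetricSpace (E n)]

theorem continuous_compBonding [TopologicalSpace ι] [DiscreteTopology ι]
    (ht : ∀ n b, Continuous (t n b)) (p : ∀ n, E n) (d n : ℕ) :
    Continuous fun z => compBonding t z p d n := by
  induction d generalizing n with
  | zero => exact continuous_const
  | succ d ih =>
    exact (continuous_prod_of_discrete_left.2 (ht n) : Continuous (Function.uncurry (t n))).comp
      ((continuous_apply n).prodMk (ih (n + 1)))

theorem dist_compBonding_succ_le (hlip : ∀ n b, LipschitzWith 1 (t n b))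
    (hdist : ∀ n b p q, dist (t n b p) (t n b q) ≤ (1 / 2) ^ n) (z : ℕ → ι) (p q : ∀ n, E n)
    (d n : ℕ) :
    dist (compBonding t z p (d + 1) n) (compBonding t z q (d + 1) n) ≤ (1 / 2) ^ (n + d) := by
  induction d generalizing n with
  | zero => exact hdist n _ _ _
  | succ d ih =>
    calc dist (compBonding t z p (d + 2) n) (compBonding t z q (d + 2) n)
        ≤ dist (compBonding t z p (d + 1) (n + 1)) (compBonding t z q (d + 1) (n + 1)) :=
          (hlip n (z n)).dist_le_mul_of_le le_rfl |>.trans_eq (one_mul _)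
      _ ≤ (1 / 2) ^ (n + 1 + d) := ih (n + 1)
      _ = (1 / 2) ^ (n + (d + 1)) := by rw [add_right_comm, add_assoc]

/- The thread is the limit of the compositions applied to arbitrary base points. -/
theorem exists_thread [TopologicalSpace ι] [DiscreteTopology ι] [∀ n, CompleteSpace (E n)]
    [∀ n, Nonempty (E n)] (hlip : ∀ n b, LipschitzWith 1 (t n b))
    (hdist : ∀ n b p q, dist (t n b p) (t n b q) ≤ (1 / 2) ^ n) :
    ∃ U : (ℕ → ι) → ∀ n, E n, (∀ n, Continuous fun z => U z n) ∧
      (∀ z n, U z n = t n (z n) (U z (n + 1))) ∧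
      ∀ z z' n, (∀ k ≥ n, z k = z' k) → U z n = U z' n := by
  let p (n : ℕ) : E n := Classical.arbitrary _
  have hstep (z : ℕ → ι) (n d : ℕ) : dist (compBonding t z p (d + 1) n)
      (compBonding t z p (d + 1 + 1) n) ≤ 2 / 2 / 2 ^ d := by
    rw [compBonding_succ z p (d + 1)]
    refine (dist_compBonding_succ_le hlip hdist z _ _ d n).trans ?_
    rw [div_self two_ne_zero, ← one_div_pow]
    exact pow_le_pow_of_le_one (by norm_num) (by norm_num) (Nat.le_add_left d n)
  choose U hU using fun z n =>
    cauchySeq_tendsto_of_complete (cauchySeq_of_le_geometric_two (hstep z n))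
  refine ⟨U, fun n => ?_, fun z n => tendsto_nhds_unique ((tendsto_add_atTop_iff_nat 1).2 (hU z n))
    (((hlip n (z n)).continuous.tendsto _).comp (hU z (n + 1))), fun z z' n h =>
    tendsto_nhds_unique (hU z n) ((hU z' n).congr fun d => (compBonding_congr h p _).symm)⟩
  have hunif : TendstoUniformly (fun d z => compBonding t z p (d + 1) n) (fun z => U z n)
      atTop := by
    refine Metric.tendstoUniformly_iff.2 fun ε hε => ?_
    have hpow : Tendsto (fun d : ℕ => (2 : ℝ) / 2 ^ d) atTop (𝓝 0) :=
      tendsto_const_nhds.div_atTop (tendsto_pow_atTop_atTop_of_one_lt one_lt_two)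
    filter_upwards [hpow.eventually_lt_const hε] with d hd z
    rw [dist_comm]
    exact (dist_le_of_le_geometric_two_of_tendsto (hstep z n) (hU z n) d).trans_lt hd
  exact hunif.continuous <| .of_forall fun d =>
    continuous_compBonding (fun n b => (hlip n b).continuous) p (d + 1) n

end InverseSystem

section CompleteMetrics

open Topology TopologicalSpace

theorem isCompletelyMetrizableSpace_of_isGδ {α : Type*} [TopologicalSpace α]
    [IsCompletelyMetrizableSpace α] {G : Set α} (hG : IsGδ G) : IsCompletelyMetrizableSpace G := by
  let := upgradeIsCompletelyMetrizable α
  obtain ⟨O, hO, rfl⟩ := isGδ_iff_eq_iInter_nat.1 hG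
  have (n : ℕ) : IsCompletelyMetrizableSpace (O n) :=
    inferInstanceAs (IsCompletelyMetrizableSpace (Opens.CompleteCopy ⟨O n, hO n⟩))
  let diag (x : ⋂ n, O n) (n : ℕ) : O n := ⟨x, mem_iInter.1 x.2 n⟩
  have hdiag : Continuous diag :=
    continuous_pi fun n => continuous_subtype_val.subtype_mk _
  have hrange : range diag = ⋂ n, {g | (g n : α) = g 0} := by
    refine Subset.antisymm (range_subset_iff.2 fun x => mem_iInter.2 fun n => rfl) fun g hg => ?_
    rw [mem_iInter] at hg
    refine ⟨⟨g 0, mem_iInter.2 fun n => ?_⟩, funext fun n => Subtype.ext (hg n).symm⟩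
    rw [← hg n]
    exact (g n).2
  have hcoord (n : ℕ) : Continuous fun g : ∀ k, O k => (g n : α) :=
    continuous_subtype_val.comp (continuous_apply n)
  have hemb : IsEmbedding diag :=
    .of_comp (g := fun g : ∀ k, O k => (g 0 : α)) hdiag (hcoord 0) .subtypeVal
  have hclosed : IsClosed (range diag) := by
    rw [hrange]
    exact isClosed_iInter fun n => isClosed_eq (hcoord n) (hcoord 0)
  exact (IsClosedEmbedding.mk hemb hclosed).IsCompletelyMetrizableSpace

/- The graph of the family, in the product metric. -/
theorem exists_homeomorph_forall_lipschitzWith_one {K : Type u} {E : Type v} {ι : Type w}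
    [Finite ι] [TopologicalSpace K] [IsCompletelyMetrizableSpace K] [MetricSpace E]
    [CompleteSpace E] {s : ι → K → E} (hs : ∀ i, Continuous (s i)) :
    ∃ (K' : Type max u v w) (_ : MetricSpace K') (_ : CompleteSpace K') (e : K' ≃ₜ K),
      ∀ i, LipschitzWith 1 (s i ∘ e) := by
  let := upgradeIsCompletelyMetrizable K
  have := Fintype.ofFinite ι
  let graph (u : K) : K × (ι → E) := (u, fun i => s i u)
  have hgraph : IsClosedEmbedding graph :=
    Function.LeftInverse.isClosedEmbedding (f := Prod.fst) (fun _ => rfl) continuous_fst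
      (continuous_id.prodMk (continuous_pi hs))
  have hlip (i : ι) : LipschitzWith 1 fun p : range graph => p.1.2 i :=
    (((LipschitzWith.eval i).comp LipschitzWith.prod_snd).comp
      (LipschitzWith.subtype_val _)).weaken (by simp)
  refine ⟨range graph, inferInstance, hgraph.isClosed_range.completeSpace_coe,
    hgraph.isEmbedding.toHomeomorph.symm, fun i => ?_⟩
  have heq : s i ∘ hgraph.isEmbedding.toHomeomorph.symm = fun p : range graph => p.1.2 i := by
    funext p
    obtain ⟨u, rfl⟩ := hgraph.isEmbedding.toHomeomorph.surjective p
    exact congrArg (s i) (hgraph.isEmbedding.toHomeomorph.symm_apply_apply u)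
  rw [heq]
  exact hlip i

end CompleteMetrics

section MartinMonk

open Topology TopologicalSpace

variable {α : Type u} [TopologicalSpace α] {X : Set α}

/-- A stage of the construction of the inverse system in the Martin–Monk argument: a complete
metric space embedded as a Gδ subset of a nonempty open set, missing only a part of `X` that has a
Gδ rank. -/
structure MartinMonkStage (X : Set α) where
  Carrier : Type u
  [metricSpace : MetricSpace Carrier]
  [completeSpace : CompleteSpace Carrier]
  emb : Carrier → α
  isEmbedding : IsEmbedding emb
  isGδ_range : IsGδ (range emb)
  region : Set α
  isOpen : IsOpen region
  region_nonempty : region.Nonempty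
  range_subset : range emb ⊆ region
  hasGδRank_diff : HasGδRank (X ∩ (region \ range emb))

attribute [instance] MartinMonkStage.metricSpace MartinMonkStage.completeSpace

theorem MartinMonkStage.nonempty [IsCompletelyMetrizableSpace α] [Nonempty α] :
    Nonempty (MartinMonkStage X) := by
  let := upgradeIsCompletelyMetrizable α
  exact ⟨{
    Carrier := α
    emb := id
    isEmbedding := .id
    isGδ_range := range_id ▸ .univ
    region := univ
    isOpen := isOpen_univ
    region_nonempty := univ_nonempty
    range_subset := subset_univ _
    hasGδRank_diff := by simpa using hasGδRank_of_isGδ .empty }⟩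

variable [IsCompletelyMetrizableSpace α] [SecondCountableTopology α]

/- Points of `X ∩ V` lost from the domain by requiring values in `G` form a set with a rank. -/
theorem exists_reductions_mapsTo_isGδ (hX : Dense X) (hhom : IsHomogeneous X)
    (hrank : ¬HasGδRank X) {f : α → α} {D U : Set α} (hf : IsLocalReduction f D U X Xᶜ)
    (hU : U.Nonempty) {W G O : Set α} (hW : IsOpen W) (hG : IsGδ G)
    (hWG : HasGδRank (X ∩ (W \ G))) (hO : IsOpen O) (hWO : (W ∩ O).Nonempty) :
    ∃ (V E : Set α) (τ : Bool → α → α), IsOpen V ∧ V.Nonempty ∧ E ⊆ V ∧ IsGδ E ∧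
      HasGδRank (X ∩ (V \ E)) ∧ ∀ b, MapsTo (τ b) E (G ∩ O) ∧
        IsReductionOn (τ b) E X (bif b then Xᶜ else X) := by
  obtain ⟨V, E, t, t', hV, hVne, hEV, hVE, hmaps, hmaps', ht, ht'⟩ :=
    exists_reductions_mapsTo hX hhom hrank hf hU (hW.inter hO) hWO
  have hcompl : Xᶜ ∩ (W \ G) = (W \ G) \ (X ∩ (W \ G)) := by
    rw [sdiff_inter_self_eq_sdiff, sdiff_eq (W \ G), inter_comm]
  have hWG' : HasGδRank (Xᶜ ∩ (W \ G)) := by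
    rw [hcompl]
    exact ((hasGδRank_of_isGδ hW.isGδ).diff (hasGδRank_of_isGδ hG)).diff hWG
  have hEt : IsGδ (E ∩ t ⁻¹' G) := isGδ_inter_preimage ht.isGδ ht.continuousOn hG
  have hEt' : IsGδ (E ∩ t' ⁻¹' G) := isGδ_inter_preimage ht'.isGδ ht'.continuousOn hG
  have hE₀ : IsGδ ((E ∩ t ⁻¹' G) ∩ (E ∩ t' ⁻¹' G)) := hEt.inter hEt'
  refine ⟨V, (E ∩ t ⁻¹' G) ∩ (E ∩ t' ⁻¹' G), fun b => bif b then t' else t, hV, hVne,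
    fun u hu => hEV hu.1.1, hE₀, ?_, ?_⟩
  · have hsplit : X ∩ (V \ ((E ∩ t ⁻¹' G) ∩ (E ∩ t' ⁻¹' G))) =
        X ∩ (V \ E) ∪ (X ∩ (E \ t ⁻¹' G) ∪ X ∩ (E \ t' ⁻¹' G)) := by
      ext u
      have := @hEV u
      simp only [mem_inter_iff, mem_sdiff, mem_union]
      tauto
    rw [hsplit]
    exact hVE.union ((ht.hasGδRank_inter_diff (fun u hu => (hmaps hu).1) hWG).union
      (ht'.hasGδRank_inter_diff (fun u hu => (hmaps' hu).1) hWG'))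
  · rw [Bool.forall_bool]
    exact ⟨⟨fun u hu => ⟨hu.1.2, (hmaps hu.1.1).2⟩, ht.mono hE₀ fun u hu => hu.1.1⟩,
      fun u hu => ⟨hu.2.2, (hmaps' hu.1.1).2⟩, ht'.mono hE₀ fun u hu => hu.1.1⟩

namespace MartinMonkStage

theorem nonempty_carrier (hX : Dense X) (hhom : IsHomogeneous X) (hrank : ¬HasGδRank X)
    (S : MartinMonkStage X) : Nonempty S.Carrier := by
  by_contra! hempty
  refine not_hasGδRank_inter_isOpen hX hhom hrank S.isOpen S.region_nonempty ?_
  simpa only [range_eq_empty, sdiff_empty] using S.hasGδRank_diff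

theorem exists_next (hX : Dense X) (hhom : IsHomogeneous X) (hrank : ¬HasGδRank X) {f : α → α}
    {D U : Set α} (hf : IsLocalReduction f D U X Xᶜ) (hU : U.Nonempty) (S : MartinMonkStage X)
    {ε : ℝ} (hε : 0 < ε) :
    ∃ (S' : MartinMonkStage X) (t : Bool → S'.Carrier → S.Carrier),
      (∀ b, LipschitzWith 1 (t b)) ∧ (∀ b p q, dist (t b p) (t b q) ≤ ε) ∧
      ∀ b p, b = true ↔ (S.emb (t b p) ∈ X ↔ S'.emb p ∉ X) := by
  obtain ⟨p₀⟩ := S.nonempty_carrier hX hhom hrank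
  obtain ⟨O, hO, hOball⟩ := S.isEmbedding.isOpen_iff.1 (Metric.isOpen_ball (x := p₀) (ε := ε / 2))
  have hp₀ : S.emb p₀ ∈ O := hOball.symm.subset (Metric.mem_ball_self (half_pos hε))
  obtain ⟨V, E, τ, hV, hVne, hEV, hE, hVE, hτ⟩ := exists_reductions_mapsTo_isGδ hX hhom hrank hf hU
    S.isOpen S.isGδ_range S.hasGδRank_diff hO ⟨_, S.range_subset (mem_range_self p₀), hp₀⟩
  choose s hs using fun b (u : E) => ((hτ b).1 u.2).1
  have hscont (b : Bool) : Continuous (s b) := by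
    rw [S.isEmbedding.continuous_iff]
    exact (hτ b).2.continuousOn.domRestrict.congr fun u => (hs b u).symm
  have hsball (b : Bool) (u : E) : dist (s b u) p₀ < ε / 2 := by
    have : s b u ∈ S.emb ⁻¹' O := by
      rw [mem_preimage, hs]
      exact ((hτ b).1 u.2).2
    rwa [hOball] at this
  have := isCompletelyMetrizableSpace_of_isGδ hE
  obtain ⟨K, _, _, e, he⟩ := exists_homeomorph_forall_lipschitzWith_one hscont
  have hrange : range ((↑) ∘ e : K → α) = E := by
    rw [e.surjective.range_comp, Subtype.range_coe]
  refine ⟨{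
    Carrier := K
    emb := (↑) ∘ e
    isEmbedding := IsEmbedding.subtypeVal.comp e.isEmbedding
    isGδ_range := hrange.symm ▸ hE
    region := V
    isOpen := hV
    region_nonempty := hVne
    range_subset := hrange.trans_subset hEV
    hasGδRank_diff := hrange.symm ▸ hVE }, fun b => s b ∘ e, he, fun b p q => ?_, fun b p => ?_⟩
  · exact (dist_triangle_right _ _ p₀).trans
      ((add_lt_add (hsball b (e p)) (hsball b (e q))).le.trans_eq (add_halves ε))
  · have hmem := (hτ b).2.mem_iff (e p) (e p).2
    rw [← hs] at hmem
    cases b <;> simp [hmem]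

theorem exists_inverse_sequence (hX : Dense X) (hhom : IsHomogeneous X) (hrank : ¬HasGδRank X)
    {f : α → α} {D U : Set α} (hf : IsLocalReduction f D U X Xᶜ) (hU : U.Nonempty) :
    ∃ (S : ℕ → MartinMonkStage X) (t : ∀ n, Bool → (S (n + 1)).Carrier → (S n).Carrier),
      (∀ n b, LipschitzWith 1 (t n b)) ∧
      (∀ n b p q, dist (t n b p) (t n b q) ≤ (1 / 2) ^ n) ∧
      ∀ n b p, b = true ↔ ((S n).emb (t n b p) ∈ X ↔ (S (n + 1)).emb p ∉ X) := by
  have : Nonempty α := hU.to_subtype.map (↑)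
  choose next t hlip hdist hmem using fun (S : MartinMonkStage X) (n : ℕ) =>
    exists_next hX hhom hrank hf hU S (pow_pos one_half_pos n : (0 : ℝ) < (1 / 2) ^ n)
  let S : ℕ → MartinMonkStage X := Nat.rec MartinMonkStage.nonempty.some fun n S => next S n
  exact ⟨S, fun n => t (S n) n, fun n => hlip (S n) n, fun n => hdist (S n) n,
    fun n => hmem (S n) n⟩

end MartinMonkStage

/- Threads of the inverse sequence over the binary sequences parametrise a subset of Cantor space
in which changing a single coordinate changes membership. -/
theorem not_isLocalReduction_compl [MeasurableSpace α] [BorelSpace α] (hXmeas : MeasurableSet X)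
    (hX : Dense X) (hhom : IsHomogeneous X) (hrank : ¬HasGδRank X) {f : α → α} {D U : Set α}
    (hU : U.Nonempty) : ¬IsLocalReduction f D U X Xᶜ := by
  intro hf
  obtain ⟨S, t, hlip, hdist, hmem⟩ :=
    MartinMonkStage.exists_inverse_sequence hX hhom hrank hf hU
  have (n : ℕ) : Nonempty (S n).Carrier := (S n).nonempty_carrier hX hhom hrank
  obtain ⟨u, hu, hthread, hcongr⟩ :=
    exists_thread (E := fun n => (S n).Carrier) (t := t) hlip hdist
  have hmeas : MeasurableSet {z | (S 0).emb (u z 0) ∈ X} :=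
    ((S 0).isEmbedding.continuous.comp (hu 0)).measurable hXmeas
  refine not_forall_flipAt_mem_iff_notMem hmeas fun m z => ?_
  have hshift (z : Cantor) (n : ℕ) :
      z n = true ↔ ((S n).emb (u z n) ∈ X ↔ (S (n + 1)).emb (u z (n + 1)) ∉ X) := by
    rw [hthread z n]
    exact hmem n (z n) _
  have hlevel {k : ℕ} (hk : k ≤ m) :
      (S k).emb (u (flipAt m z) k) ∈ X ↔ (S k).emb (u z k) ∉ X := by
    induction hk using Nat.decreasingInduction with
    | self =>
      have h := hshift (flipAt m z) m
      rw [hcongr _ z (m + 1) fun k hk => flipAt_of_ne (by lia) z, flipAt_self,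
        Bool.not_eq_true'] at h
      have := hshift z m
      grind
    | of_succ k hk ih =>
      have h := hshift (flipAt m z) k
      rw [flipAt_of_ne hk.ne] at h
      have := hshift z k
      tauto
  exact hlevel (Nat.zero_le m)

end MartinMonk

/-- A dense homogeneous first category Borel subspace of Cantor space outside Δ is
Wadge equivalent to a first category semiideal. -/
theorem firstCategory_wadge_semiideal (X : Set Cantor)
    (hB : @MeasurableSet Cantor (borel Cantor) X) (hd : Dense X)
    (hhom : IsHomogeneous X) (hfc : FirstCategory X) (hdel : ¬ InDelta X) :
    ∃ R : Set Cantor, IsSemiideal R ∧ FirstCategory R ∧ WadgeEquiv R X := by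
  have hXmeas : MeasurableSet X := by rwa [BorelSpace.measurable_eq (α := Cantor)]
  have hX : X.Nonempty := hd.nonempty
  have hRmeas : MeasurableSet (branchSemiideal X) := measurableSet_branchSemiideal hX hXmeas
  refine ⟨branchSemiideal X, isSemiideal_branchSemiideal hX, firstCategory_branchSemiideal X, ?_,
    wadgeLe_branchSemiideal X⟩
  obtain hRX | ⟨g, hg, hgX⟩ := GameTree.exists_continuous_eq_preimage_or hRmeas hXmeas
  · exact hRX
  · obtain ⟨f, D, U, hU, hf⟩ := exists_isLocalReduction_compl hX hfc hg hgX
    exact absurd hf (not_isLocalReduction_compl hXmeas hd hhom (mt HasGδRank.inDelta hdel) hU)
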